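/- arXiv:1605.02987 — 4 statements merged into one kernel-verified Lean document; each statement's English description precedes it below -/
import Mathlib

section
/- Let n ≥ 1 and let f be a continuous map from the unit n-sphere S^n ⊆ ℝ^{n+1} to ℝ^n. Then there exists a point x ∈ S^n such that f(x) = f(-x). -/
namespace BU

/-- Mod 2 chains of finite lists of points. -/
abbrev Ch (X : Type*) := List X →₀ ZMod 2

noncomputable section

variable {X : Type*}

/-- prepend a vertex -/
def cn (a : X) : Ch X →ₗ[ZMod 2] Ch X := Finsupp.lmapDomain (ZMod 2) (ZMod 2) (List.cons a)

/-- push-forward -/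
def mp (φ : X → X) : Ch X →ₗ[ZMod 2] Ch X := Finsupp.lmapDomain (ZMod 2) (ZMod 2) (List.map φ)

/-- basis element -/
def bs (l : List X) : Ch X := Finsupp.single l 1

/-- boundary of a list -/
def dl : List X → Ch X
  | [] => 0
  | a :: l => bs l + cn a (dl l)

/-- prism of a list -/
def pl (φ ψ : X → X) : List X → Ch X
  | [] => 0
  | a :: l => bs (φ a :: ψ a :: l.map ψ) + cn (φ a) (pl φ ψ l)

/-- linear extension -/
def ext {M : Type*} [AddCommGroup M] [Module (ZMod 2) M] (c : List X → M) : Ch X →ₗ[ZMod 2] M :=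
  Finsupp.linearCombination (ZMod 2) c

@[simp] lemma ext_bs {M : Type*} [AddCommGroup M] [Module (ZMod 2) M] (c : List X → M) (l : List X) :
    ext c (bs l) = c l := by simp [ext, bs]

@[simp] lemma cn_bs (a : X) (l : List X) : cn a (bs l) = bs (a :: l) := by simp [cn, bs]

@[simp] lemma mp_bs (φ : X → X) (l : List X) : mp φ (bs l) = bs (l.map φ) := by simp [mp, bs]

lemma lin_ext {M : Type*} [AddCommGroup M] [Module (ZMod 2) M] {f g : Ch X →ₗ[ZMod 2] M}
    (h : ∀ l, f (bs l) = g (bs l)) (z : Ch X) : f z = g z := by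
  have : f = g := Finsupp.lhom_ext' fun l => LinearMap.ext_ring (by simpa [bs] using h l)
  rw [this]

lemma dbl {M : Type*} [AddCommGroup M] [Module (ZMod 2) M] (u : M) : u + u = 0 :=
  ZModModule.add_self u

/-- boundary -/
def d : Ch X →ₗ[ZMod 2] Ch X := ext dl

/-- prism -/
def pr (φ ψ : X → X) : Ch X →ₗ[ZMod 2] Ch X := ext (pl φ ψ)

lemma d_cn (a : X) (z : Ch X) : d (cn a z) = z + cn a (d z) :=
  lin_ext (f := d ∘ₗ cn a) (g := LinearMap.id + cn a ∘ₗ d) (by intro l; simp [d, dl]) z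

lemma mp_cn (φ : X → X) (a : X) (z : Ch X) : mp φ (cn a z) = cn (φ a) (mp φ z) :=
  lin_ext (f := mp φ ∘ₗ cn a) (g := cn (φ a) ∘ₗ mp φ) (by intro l; simp) z

lemma d_mp (φ : X → X) (z : Ch X) : d (mp φ z) = mp φ (d z) := by
  refine lin_ext (f := d ∘ₗ mp φ) (g := mp φ ∘ₗ d) ?_ z
  intro l
  induction l with
  | nil => simp [d, dl]
  | cons a l ih =>
    simp only [LinearMap.comp_apply, mp_bs, d, ext_bs, List.map_cons, dl, map_add, mp_cn] at ih ⊢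
    rw [ih]

lemma pr_cn (φ ψ : X → X) (a : X) (z : Ch X) :
    pr φ ψ (cn a z) = cn (φ a) (cn (ψ a) (mp ψ z)) + cn (φ a) (pr φ ψ z) :=
  lin_ext (f := pr φ ψ ∘ₗ cn a)
    (g := cn (φ a) ∘ₗ cn (ψ a) ∘ₗ mp ψ + cn (φ a) ∘ₗ pr φ ψ) (by intro l; simp [pr, pl]) z

lemma prism (φ ψ : X → X) (z : Ch X) :
    d (pr φ ψ z) + pr φ ψ (d z) = mp φ z + mp ψ z := by
  refine lin_ext (f := d ∘ₗ pr φ ψ + pr φ ψ ∘ₗ d) (g := mp φ + mp ψ) ?_ z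
  intro l
  simp only [LinearMap.add_apply, LinearMap.comp_apply]
  induction l with
  | nil => simp [d, pr, pl, dl, dbl]
  | cons a l ih =>
    have e1 : bs (a :: l) = cn a (bs l) := by simp
    rw [e1, pr_cn, d_cn, map_add, map_add, d_cn, d_cn, d_cn, d_mp, pr_cn, mp_cn, mp_cn, map_add]
    have e2 := congrArg (cn (φ a)) ih
    simp only [map_add] at e2
    have e3 : cn (φ a) (pr φ ψ (d (bs l))) = cn (φ a) (d (pr φ ψ (bs l))) +
        (cn (φ a) (mp φ (bs l)) + cn (φ a) (mp ψ (bs l))) := by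
      rw [← e2, ← add_assoc, dbl, zero_add]
    rw [e3]
    generalize cn (φ a) (d (pr φ ψ (bs l))) = A
    generalize cn (φ a) (mp φ (bs l)) = B
    generalize cn (φ a) (mp ψ (bs l)) = C
    generalize cn (φ a) (cn (ψ a) _) = D
    generalize pr φ ψ (bs l) = E
    generalize cn (ψ a) (mp ψ (bs l)) = F
    have hA := dbl A
    have hC := dbl C
    have hD := dbl D
    have hE := dbl E
    rw [show F + (C + D) + (E + A) + (E + (D + (A + (B + C)))) =
      (B + F) + (A + A) + (C + C) + (D + D) + (E + E) by abel, hA, hC, hD, hE]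
    simp

/-- the cup product cocycle -/
def W (t : ℕ → X → ZMod 2) : ℕ → List X → ZMod 2
  | 0, [_] => 1
  | k + 1, x :: y :: l => (t k x + t k y) * W t k (y :: l)
  | _, _ => 0

/-- the antisymmetric primitive -/
def A (t : ℕ → X → ZMod 2) (k : ℕ) : List X → ZMod 2
  | [] => 0
  | x :: l => t k x * W t k (x :: l)

@[simp] lemma W_nil (t : ℕ → X → ZMod 2) (k : ℕ) : W t k [] = 0 := by
  cases k <;> simp [W]

lemma W_cc (t : ℕ → X → ZMod 2) (k : ℕ) (x y : X) (z : Ch X) :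
    ext (W t (k+1)) (cn x (cn y z)) = (t k x + t k y) * ext (W t k) (cn y z) :=
  lin_ext (f := ext (W t (k+1)) ∘ₗ cn x ∘ₗ cn y)
    (g := (t k x + t k y) • (ext (W t k) ∘ₗ cn y)) (by intro l; simp [W]) z

lemma W_cc0 (t : ℕ → X → ZMod 2) (x y : X) (z : Ch X) :
    ext (W t 0) (cn x (cn y z)) = 0 :=
  lin_ext (f := ext (W t 0) ∘ₗ cn x ∘ₗ cn y) (g := 0) (by intro l; simp [W]) z

lemma A_cn (t : ℕ → X → ZMod 2) (k : ℕ) (x : X) (z : Ch X) :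
    ext (A t k) (cn x z) = t k x * ext (W t k) (cn x z) :=
  lin_ext (f := ext (A t k) ∘ₗ cn x) (g := t k x • (ext (W t k) ∘ₗ cn x))
    (by intro l; simp [A]) z

lemma two_zero : (2 : ZMod 2) = 0 := by decide

lemma eq_of_add {a b : ZMod 2} (h : a + b = 0) : b = a := by
  linear_combination h - a * two_zero

lemma W_d (t : ℕ → X → ZMod 2) (k : ℕ) (l : List X) : ext (W t k) (dl l) = 0 := by
  induction k generalizing l with
  | zero =>
    match l with
    | [] => simp [dl]
    | [x] => simp [dl]
    | [x, y] => simp [dl, W, dbl]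
    | x :: y :: z :: l => simp [dl, W, W_cc0]
  | succ k ih =>
    match l with
    | [] => simp [dl]
    | [x] => simp [dl]
    | x :: y :: l =>
      have h := ih (y :: l)
      simp only [dl, map_add, ext_bs] at h
      have h' := eq_of_add h
      simp only [dl, map_add, ext_bs, W_cc, cn_bs, h']
      match l with
      | [] => simp [W]
      | z :: l =>
        simp only [W]
        linear_combination (t k x + t k y + t k z) * W t k (z :: l) * two_zero

lemma A_d (t : ℕ → X → ZMod 2) (k : ℕ) (z : Ch X) :
    ext (A t k) (d z) = ext (W t (k + 1)) z := by
  refine lin_ext (f := ext (A t k) ∘ₗ d) (g := ext (W t (k+1))) ?_ z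
  intro l
  simp only [LinearMap.comp_apply, d, ext_bs]
  match l with
  | [] => simp [dl]
  | [x] => simp [dl, A, W]
  | x :: y :: l =>
    have h := W_d t k (x :: y :: l)
    rw [dl, map_add, ext_bs] at h
    have h' := eq_of_add h
    rw [dl, map_add, ext_bs, A_cn, h']
    simp only [A, W]
    ring

/-- chains supported on lists satisfying `p` -/
def sp (p : List X → Prop) : Submodule (ZMod 2) (Ch X) := Submodule.span _ (bs '' {l | p l})

lemma bs_mem {p : List X → Prop} {l : List X} (h : p l) : bs l ∈ sp p :=
  Submodule.subset_span ⟨l, h, rfl⟩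

lemma sp_map {p : List X → Prop} {M : Type*} [AddCommGroup M] [Module (ZMod 2) M]
    (f : Ch X →ₗ[ZMod 2] M) (S : Submodule (ZMod 2) M) (h : ∀ l, p l → f (bs l) ∈ S)
    {z : Ch X} (hz : z ∈ sp p) : f z ∈ S := by
  have : sp p ≤ S.comap f := Submodule.span_le.2 (by rintro _ ⟨l, hl, rfl⟩; exact h l hl)
  exact this hz

lemma sp_eq {p : List X → Prop} {M : Type*} [AddCommGroup M] [Module (ZMod 2) M]
    (f g : Ch X →ₗ[ZMod 2] M) (h : ∀ l, p l → f (bs l) = g (bs l))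
    {z : Ch X} (hz : z ∈ sp p) : f z = g z := by
  have := sp_map (f - g) ⊥ (by intro l hl; simp [h l hl]) hz
  simpa [sub_eq_zero] using this

lemma W_map (t : ℕ → X → ZMod 2) (ν : X → X) (k : ℕ) (l : List X)
    (h : ∀ j, ∀ x ∈ l, t j (ν x) = t j x + 1) : W t k (l.map ν) = W t k l := by
  induction k generalizing l with
  | zero =>
    match l with
    | [] => simp
    | [x] => simp [W]
    | x :: y :: l => simp [W]
  | succ k ih =>
    match l with
    | [] => simp
    | [x] => simp [W]
    | x :: y :: l =>
      have := ih (y :: l) (fun j x hx => h j x (List.mem_cons_of_mem _ hx))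
      simp only [List.map_cons] at this
      simp only [List.map_cons, W, this, h k x (by simp), h k y (by simp)]
      linear_combination W t k (y :: l) * two_zero

lemma A_map (t : ℕ → X → ZMod 2) (ν : X → X) (k : ℕ) (l : List X)
    (h : ∀ j, ∀ x ∈ l, t j (ν x) = t j x + 1) : A t k l + A t k (l.map ν) = W t k l := by
  have hW := W_map t ν k l h
  match l with
  | [] => simp [A]
  | x :: l =>
    simp only [List.map_cons] at hW
    simp only [List.map_cons, A, hW, h k x (by simp)]
    linear_combination t k x * W t k (x :: l) * two_zero

/-- The inductive step on the cochain side. -/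
lemma W_step (t : ℕ → X → ZMod 2) (ν : X → X) (k : ℕ) (z z' : Ch X)
    (hz : z ∈ sp (fun l => ∀ j, ∀ x ∈ l, t j (ν x) = t j x + 1))
    (hd : d z' = z + mp ν z) : ext (W t (k + 1)) z' = ext (W t k) z := by
  rw [← A_d, hd, map_add]
  exact sp_eq (ext (A t k) + ext (A t k) ∘ₗ mp ν) (ext (W t k))
    (by intro l hl; simpa using A_map t ν k l hl) hz

lemma W_ne (t : ℕ → X → ZMod 2) (n : ℕ) (l : List X) (h : W t n l ≠ 0) :
    (∃ x, x ∈ l) ∧ ∀ k < n, ∃ x ∈ l, ∃ y ∈ l, t k x ≠ t k y := by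
  induction n generalizing l with
  | zero =>
    match l with
    | [] => simp at h
    | x :: l => exact ⟨⟨x, by simp⟩, by simp⟩
  | succ n ih =>
    match l with
    | [] => simp at h
    | [x] => simp [W] at h
    | x :: y :: l =>
      refine ⟨⟨x, by simp⟩, fun k hk => ?_⟩
      simp only [W] at h
      rcases Nat.lt_succ_iff_lt_or_eq.1 hk with hk | rfl
      · obtain ⟨a, ha, b, hb, hab⟩ := (ih (y :: l) (right_ne_zero_of_mul h)).2 k hk
        exact ⟨a, List.mem_cons_of_mem _ ha, b, List.mem_cons_of_mem _ hb, hab⟩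
      · refine ⟨x, by simp, y, by simp, fun e => left_ne_zero_of_mul h ?_⟩
        rw [e, dbl]

lemma pl_mem (φ ψ : X → X) (l : List X) :
    pl φ ψ l ∈ sp (fun l' => ∀ x ∈ l', ∃ v ∈ l, x = φ v ∨ x = ψ v) := by
  induction l with
  | nil => simp [pl]
  | cons a l ih =>
    refine add_mem (bs_mem ?_) (sp_map (cn (φ a)) _ ?_ ih)
    · intro x hx
      simp only [List.mem_cons, List.mem_map] at hx
      rcases hx with rfl | rfl | ⟨v, hv, rfl⟩
      · exact ⟨a, by simp, Or.inl rfl⟩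
      · exact ⟨a, by simp, Or.inr rfl⟩
      · exact ⟨v, by simp [hv], Or.inr rfl⟩
    · intro l' hl'
      rw [cn_bs]
      refine bs_mem ?_
      intro x hx
      rcases List.mem_cons.1 hx with rfl | hx
      · exact ⟨a, by simp, Or.inl rfl⟩
      · obtain ⟨v, hv, h⟩ := hl' x hx
        exact ⟨v, by simp [hv], h⟩

/-- A homotopy in small steps from the identity to a constant map fills in `z + ν z`. -/
lemma fill (φ : ℕ → X → X) (ν : X → X) (N : ℕ) (p q : List X → Prop)
    (hpq : ∀ j l, p l → ∀ l', (∀ x ∈ l', ∃ v ∈ l, x = φ j v ∨ x = φ (j+1) v) → q l')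
    (h0 : ∀ l, p l → ∀ x ∈ l, φ 0 x = x) (hN : ∀ x y, φ N x = φ N y)
    (hν : ∀ l, p l → p (l.map ν))
    (z : Ch X) (hz : z ∈ sp p) (hdz : d (z + mp ν z) = 0) :
    ∃ z' ∈ sp q, d z' = z + mp ν z := by
  set c := z + mp ν z with hc
  have hcp : c ∈ sp p := add_mem hz
    (sp_map (mp ν) _ (fun l hl => by rw [mp_bs]; exact bs_mem (hν l hl)) hz)
  have key : ∀ M, ∃ z' ∈ sp q, d z' = mp (φ 0) c + mp (φ M) c := by
    intro M
    induction M with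
    | zero => exact ⟨0, zero_mem _, by simp [dbl]⟩
    | succ M ih =>
      obtain ⟨z', hz', e⟩ := ih
      refine ⟨z' + pr (φ M) (φ (M+1)) c, add_mem hz' ?_, ?_⟩
      · refine sp_map (pr (φ M) (φ (M+1))) _ (fun l hl => ?_) hcp
        rw [pr, ext_bs]
        refine sp_map LinearMap.id _ (fun l' hl' => bs_mem (hpq M l hl l' hl')) (pl_mem _ _ l)
      · have := prism (φ M) (φ (M+1)) c
        rw [hdz, map_zero, add_zero] at this
        rw [map_add, e, this, add_assoc, ← add_assoc (mp (φ M) c), dbl, zero_add]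
  obtain ⟨z', hz', e⟩ := key N
  refine ⟨z', hz', ?_⟩
  have e0 : mp (φ 0) c = c := sp_eq (mp (φ 0)) LinearMap.id (fun l hl => by
    rw [mp_bs, LinearMap.id_apply]
    congr 1
    conv_rhs => rw [← List.map_id l]
    exact List.map_congr_left (h0 l hl)) hcp
  have eN : mp (φ N) (mp ν z) = mp (φ N) z :=
    lin_ext (f := mp (φ N) ∘ₗ mp ν) (g := mp (φ N)) (fun l => by
      simp only [LinearMap.comp_apply, mp_bs, List.map_map]
      congr 1
      exact List.map_congr_left fun x _ => hN _ _) z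
  rw [e, e0, hc, map_add (mp (φ N)), eN, dbl, add_zero]

end

end BU

namespace BU

/-- `E n` is the ambient Euclidean space. -/
abbrev E (n : ℕ) := EuclideanSpace ℝ (Fin (n + 1))

/-- small lists in the `k`-dimensional subsphere -/
def good (n : ℕ) (k : ℕ) (r : ℝ) (l : List (E n)) : Prop :=
  (∀ x ∈ l, ‖x‖ = 1 ∧ ∀ i : Fin (n + 1), k < i → x i = 0) ∧ ∀ x ∈ l, ∀ y ∈ l, dist x y ≤ r

/-- rotation towards `e` -/
noncomputable def rot {n : ℕ} (e : E n) (N : ℕ) (j : ℕ) (x : E n) : E n :=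
  Real.cos (j * (Real.pi / 2 / N)) • x + Real.sin (j * (Real.pi / 2 / N)) • e

lemma rot_norm {n : ℕ} (i : Fin (n + 1)) (N j : ℕ) (x : E n) (hx : ‖x‖ = 1) (hi : x i = 0) :
    ‖rot (EuclideanSpace.single i 1) N j x‖ = 1 := by
  rw [← sq_eq_sq₀ (norm_nonneg _) zero_le_one, rot, norm_add_sq_real]
  simp [norm_smul, inner_smul_left, inner_smul_right, EuclideanSpace.inner_single_right, hx, hi]

lemma rot_dist_same {n : ℕ} (e : E n) (N j : ℕ) (x y : E n) :
    dist (rot e N j x) (rot e N j y) ≤ dist x y := by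
  rw [dist_eq_norm, dist_eq_norm, rot, rot, add_sub_add_right_eq_sub, ← smul_sub, norm_smul]
  exact mul_le_of_le_one_left (norm_nonneg _) (Real.abs_cos_le_one _)

lemma rot_dist_succ {n : ℕ} (e : E n) (N j : ℕ) (x : E n) (hx : ‖x‖ = 1) (he : ‖e‖ = 1) :
    dist (rot e N j x) (rot e N (j + 1) x) ≤ Real.pi / N := by
  set a := (j : ℝ) * (Real.pi / 2 / N) with ha
  set b := ((j + 1 : ℕ) : ℝ) * (Real.pi / 2 / N) with hb
  have hab : dist a b = Real.pi / 2 / N := by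
    rw [dist_comm, Real.dist_eq, ha, hb]
    push_cast
    rw [show ((j : ℝ) + 1) * (Real.pi / 2 / N) - j * (Real.pi / 2 / N) = Real.pi / 2 / N by ring]
    exact abs_of_nonneg (by positivity)
  have hc : |Real.cos a - Real.cos b| ≤ Real.pi / 2 / N := by
    rw [← hab, Real.dist_eq]
    exact Real.abs_cos_sub_cos_le a b
  have hs : |Real.sin a - Real.sin b| ≤ Real.pi / 2 / N := by
    rw [← hab, Real.dist_eq]
    exact Real.abs_sin_sub_sin_le a b
  rw [dist_eq_norm]
  have : rot e N j x - rot e N (j + 1) x =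
      (Real.cos a - Real.cos b) • x + (Real.sin a - Real.sin b) • e := by
    simp only [rot, ← ha, ← hb]
    module
  rw [this]
  refine (norm_add_le _ _).trans ?_
  rw [norm_smul, norm_smul, hx, he, Real.norm_eq_abs, Real.norm_eq_abs]
  have : Real.pi / N = Real.pi / 2 / N + Real.pi / 2 / N := by ring
  linarith

lemma good_step {n k : ℕ} (hk : k + 1 < n + 1) (r η : ℝ) (N j : ℕ) (hN : Real.pi / N ≤ η)
    (l : List (E n)) (hl : good n k r l) (l' : List (E n))
    (h : ∀ x ∈ l', ∃ v ∈ l, x = rot (EuclideanSpace.single ⟨k + 1, hk⟩ 1) N j v ∨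
      x = rot (EuclideanSpace.single ⟨k + 1, hk⟩ 1) N (j + 1) v) : good n (k + 1) (r + η) l' := by
  have hη : 0 ≤ η := le_trans (by positivity) hN
  have he : ‖(EuclideanSpace.single (⟨k + 1, hk⟩ : Fin (n + 1)) (1 : ℝ) : E n)‖ = 1 := by simp
  constructor
  · have key : ∀ v ∈ l, ∀ j, ‖rot (EuclideanSpace.single ⟨k + 1, hk⟩ 1) N j v‖ = 1 ∧
        ∀ i : Fin (n + 1), k + 1 < i →
          (rot (EuclideanSpace.single ⟨k + 1, hk⟩ 1) N j v) i = 0 := by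
      intro v hv j
      obtain ⟨h1, h2⟩ := hl.1 v hv
      refine ⟨rot_norm _ _ _ _ h1 (h2 _ (by simp)), fun i hi => ?_⟩
      have hne : i ≠ ⟨k + 1, hk⟩ := by
        rintro rfl
        simp at hi
      simp [rot, h2 i (by omega), hne]
    intro x hx
    obtain ⟨v, hv, rfl | rfl⟩ := h x hx
    · exact key v hv j
    · exact key v hv (j + 1)
  · have key : ∀ v ∈ l, ∀ w ∈ l, dist (rot (EuclideanSpace.single ⟨k + 1, hk⟩ 1) N j v)
        (rot (EuclideanSpace.single ⟨k + 1, hk⟩ 1) N (j + 1) w) ≤ r + η := by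
      intro v hv w hw
      refine (dist_triangle _ (rot (EuclideanSpace.single ⟨k + 1, hk⟩ 1) N j w) _).trans ?_
      exact add_le_add ((rot_dist_same _ _ _ _ _).trans (hl.2 v hv w hw))
        ((rot_dist_succ _ _ _ _ (hl.1 w hw).1 he).trans hN)
    intro x hx y hy
    obtain ⟨v, hv, rfl | rfl⟩ := h x hx <;> obtain ⟨w, hw, rfl | rfl⟩ := h y hy
    · exact (rot_dist_same _ _ _ _ _).trans ((hl.2 v hv w hw).trans (by linarith))
    · exact key v hv w hw
    · rw [dist_comm]
      exact key w hw v hv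
    · exact (rot_dist_same _ _ _ _ _).trans ((hl.2 v hv w hw).trans (by linarith))

lemma main (n : ℕ) (t : ℕ → E n → ZMod 2) (ht : ∀ k x, ‖x‖ = 1 → t k (-x) = t k x + 1)
    (η : ℝ) (hη : 0 < η) (k : ℕ) (hk : k < n + 1) :
    ∃ z ∈ sp (good n k (k * η)), d (z + mp (fun x => -x) z) = 0 ∧ ext (W t k) z = 1 := by
  induction k with
  | zero =>
    refine ⟨bs [EuclideanSpace.single 0 1], bs_mem ?_, ?_, ?_⟩
    · constructor
      · intro x hx
        rw [List.mem_singleton] at hx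
        subst hx
        refine ⟨by simp, fun i hi => ?_⟩
        have : i ≠ 0 := by
          rintro rfl
          simp at hi
        simp [this]
      · intro x hx y hy
        rw [List.mem_singleton] at hx hy
        simp [hx, hy]
    · simp [d, dl, dbl]
    · simp [W]
  | succ k ih =>
    obtain ⟨z, hz, hd, hW⟩ := ih (by omega)
    obtain ⟨N, hN⟩ := exists_nat_gt (Real.pi / η)
    have hN0 : (0 : ℝ) < N := lt_of_le_of_lt (by positivity) hN
    have hNη : Real.pi / N ≤ η := by
      rw [div_lt_iff₀ hη] at hN
      rw [div_le_iff₀ hN0]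
      linarith
    obtain ⟨z', hz', e⟩ := fill (rot (EuclideanSpace.single ⟨k + 1, hk⟩ 1) N) (fun x => -x) N
      (good n k (k * η)) (good n (k + 1) ((k + 1 : ℕ) * η))
      (fun j l hl l' h => by
        have := good_step hk (k * η) η N j hNη l hl l' h
        rwa [show (k : ℝ) * η + η = ((k + 1 : ℕ) : ℝ) * η by push_cast; ring] at this)
      (fun l hl x hx => by simp [rot])
      (fun x y => by
        have : (N : ℝ) * (Real.pi / 2 / N) = Real.pi / 2 := by field_simp
        simp [rot, this])
      (fun l hl => by
        constructor
        · intro x hx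
          obtain ⟨v, hv, rfl⟩ := List.mem_map.1 hx
          obtain ⟨h1, h2⟩ := hl.1 v hv
          exact ⟨by simpa using h1, fun i hi => by simp [h2 i hi]⟩
        · intro x hx y hy
          obtain ⟨v, hv, rfl⟩ := List.mem_map.1 hx
          obtain ⟨w, hw, rfl⟩ := List.mem_map.1 hy
          simpa using hl.2 v hv w hw)
      z hz hd
    refine ⟨z', hz', ?_, ?_⟩
    · have inv : mp (fun x : E n => -x) (mp (fun x => -x) z) = z :=
        lin_ext (f := mp (fun x : E n => -x) ∘ₗ mp (fun x => -x)) (g := LinearMap.id)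
          (fun l => by simp) z
      rw [map_add, d_mp, e, map_add, inv, add_comm (mp (fun x : E n => -x) z) z, dbl]
    · rw [W_step t (fun x => -x) k z z' _ e, hW]
      refine sp_map LinearMap.id _ (fun l hl => bs_mem ?_) hz
      exact fun j x hx => ht j x (hl.1 x hx).1

open Classical in
/-- an antipodal sign function agreeing with the sign of `g · k` where that is non-zero -/
noncomputable def sg {n : ℕ} (g : E n → EuclideanSpace ℝ (Fin n)) (k : ℕ) (x : E n) : ZMod 2 :=
  if ∃ h : k < n, 0 < g x ⟨k, h⟩ then 1
  else if ∃ h : k < n, g x ⟨k, h⟩ < 0 then 0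
  else if ∃ i, 0 < g x i ∧ ∀ j < i, g x j = 0 then 1 else 0

lemma sg_neg {n : ℕ} (g : E n → EuclideanSpace ℝ (Fin n)) (k : ℕ) (x : E n)
    (hg : g (-x) = -g x) (h0 : g x ≠ 0) : sg g k (-x) = sg g k x + 1 := by
  have hone : (1 : ZMod 2) + 1 = 0 := by decide
  have hex : ∃ i, g x i ≠ 0 := by
    by_contra! h
    exact h0 (by ext i; simp [h i])
  obtain ⟨i, hi, hmin⟩ : ∃ i, g x i ≠ 0 ∧ ∀ j < i, g x j = 0 := by
    obtain ⟨i, hi, hm⟩ := WellFounded.has_min (wellFounded_lt (α := Fin n)) {i | g x i ≠ 0} hex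
    exact ⟨i, hi, fun j hj => by
      by_contra h
      exact hm j h hj⟩
  have h3 : (∃ i, g x i < 0 ∧ ∀ j < i, g x j = 0) ↔ ¬ ∃ i, 0 < g x i ∧ ∀ j < i, g x j = 0 := by
    constructor
    · rintro ⟨a, ha, ha'⟩ ⟨b, hb, hb'⟩
      rcases lt_trichotomy a b with h | h | h
      · have := hb' a h
        linarith
      · subst h
        linarith
      · have := ha' b h
        linarith
    · intro h
      rcases lt_or_gt_of_ne hi with h' | h'
      · exact ⟨i, h', hmin⟩
      · exact absurd ⟨i, h', hmin⟩ h
  have h12 : (∃ h : k < n, g x ⟨k, h⟩ < 0) → ¬ ∃ h : k < n, 0 < g x ⟨k, h⟩ := by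
    rintro ⟨h, h1⟩ ⟨_, h2⟩
    linarith
  simp only [sg, hg, PiLp.neg_apply, Left.neg_pos_iff, Left.neg_neg_iff, neg_eq_zero, h3]
  split_ifs <;> simp_all

end BU

/-- **Borsuk–Ulam Theorem.** For `n ≥ 1` and a continuous map `f` from the unit
`n`-sphere `S^n ⊆ ℝ^{n+1}` into `ℝ^n`, there exists `x ∈ S^n` with `f x = f (-x)`. -/
theorem borsuk_ulam (n : ℕ) (hn : 1 ≤ n)
    (f : EuclideanSpace ℝ (Fin (n + 1)) → EuclideanSpace ℝ (Fin n))
    (hf : ContinuousOn f (Metric.sphere (0 : EuclideanSpace ℝ (Fin (n + 1))) 1)) :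
    ∃ x ∈ Metric.sphere (0 : EuclideanSpace ℝ (Fin (n + 1))) 1, f x = f (-x) := by
  by_contra! hne
  set S := Metric.sphere (0 : EuclideanSpace ℝ (Fin (n + 1))) 1 with hS
  set g : BU.E n → EuclideanSpace ℝ (Fin n) := fun x => f x - f (-x) with hg
  have g0 : ∀ x ∈ S, g x ≠ 0 := fun x hx => sub_ne_zero.2 (hne x hx)
  have gc : ContinuousOn g S := hf.sub (hf.comp continuous_neg.continuousOn (by
    intro x hx
    simpa [hS] using hx))
  have gS : Continuous (fun x : S => g x) := continuousOn_iff_continuous_domRestrict.1 gc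
  have gi : ∀ i, Continuous (fun x : S => g x i) := fun i =>
    (EuclideanSpace.proj i : EuclideanSpace ℝ (Fin n) →L[ℝ] ℝ).continuous.comp gS
  -- Lebesgue number
  let c : Fin n × Bool → Set S := fun p => if p.2 then {x | 0 < g x p.1} else {x | g x p.1 < 0}
  have hcpt : IsCompact (Set.univ : Set S) :=
    isCompact_iff_isCompact_univ.1 (isCompact_sphere _ _)
  obtain ⟨δ, hδ, hleb⟩ := lebesgue_number_lemma_of_metric (c := c) hcpt
    (by
      rintro ⟨i, b⟩
      cases b
      · simpa [c] using isOpen_lt (gi i) continuous_const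
      · simpa [c] using isOpen_lt continuous_const (gi i))
    (by
      intro x _
      have : ∃ i, g x i ≠ 0 := by
        by_contra! h
        exact g0 x x.2 (by ext i; simp [h i])
      obtain ⟨i, hi⟩ := this
      rw [Set.mem_iUnion]
      rcases lt_or_gt_of_ne hi with h | h
      · exact ⟨(i, false), by simpa [c] using h⟩
      · exact ⟨(i, true), by simpa [c] using h⟩)
  have hn0 : (0 : ℝ) < n := by exact_mod_cast hn
  obtain ⟨z, hz, -, hW⟩ := BU.main n (BU.sg g)
    (fun k x hx => BU.sg_neg g k x (by simp [hg]) (g0 x (by simpa [hS] using hx)))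
    (δ / 2 / n) (by positivity) n (by omega)
  have : BU.ext (BU.W (BU.sg g) n) z = (0 : BU.Ch (BU.E n) →ₗ[ZMod 2] ZMod 2) z := by
    refine BU.sp_eq _ _ (fun l hl => ?_) hz
    rw [BU.ext_bs, LinearMap.zero_apply]
    by_contra hWl
    obtain ⟨⟨x, hx⟩, hk⟩ := BU.W_ne _ _ _ hWl
    have hmem : ∀ y ∈ l, y ∈ S := fun y hy => by simpa [hS] using (hl.1 y hy).1
    obtain ⟨⟨i, b⟩, hi⟩ := hleb ⟨x, hmem x hx⟩ trivial
    have hball : ∀ y, ∀ hy : y ∈ l, (⟨y, hmem y hy⟩ : S) ∈ c (i, b) := fun y hy => hi (by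
      rw [Metric.mem_ball, Subtype.dist_eq]
      have := hl.2 y hy x hx
      rw [mul_div_cancel₀ _ hn0.ne'] at this
      exact lt_of_le_of_lt this (by linarith))
    obtain ⟨u, hu, v, hv, huv⟩ := hk i i.2
    apply huv
    have hu' := hball u hu
    have hv' := hball v hv
    cases b
    · simp only [c, Bool.false_eq_true, if_false, Set.mem_ofPred_eq] at hu' hv'
      simp [BU.sg, hu', hv', hu'.le.not_gt, hv'.le.not_gt]
    · simp only [c, if_true, Set.mem_ofPred_eq] at hu' hv'
      simp [BU.sg, hu', hv']
  rw [hW] at this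
  simp at this
end

section
/- Let n ≥ 1 and let f be a continuous map from the unit n-sphere S^n ⊆ ℝ^{n+1} to ℝ^n. Then f is not injective: there exist points x, y ∈ S^n with x ≠ y and f(x) = f(y). -/
open MeasureTheory Set Filter Topology

theorem sph_interp (D : ℕ) (ε : ℝ) (hε : 0 < ε) :
    ∃ (s : Finset ℝ) (w : ℝ → ℝ), (∀ t ∈ s, 0 < t ∧ t < ε) ∧ (∑ t ∈ s, w t = 1) ∧
      ∀ P : Polynomial ℝ, P.natDegree ≤ D → P.eval 1 = ∑ t ∈ s, w t * P.eval t := by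
  obtain ⟨s, hs, hcard⟩ := (Set.Ioo_infinite hε).exists_subset_card_eq (D + 1)
  have hne : s.Nonempty := by
    rw [← Finset.card_pos]; omega
  refine ⟨s, fun t => (Lagrange.basis s id t).eval 1, fun t ht => hs ht, ?_, ?_⟩
  · rw [← Polynomial.eval_finsetSum, Lagrange.sum_basis (Function.injective_id.injOn) hne]
    simp
  · intro P hP
    have h := Lagrange.eq_interpolate (f := P) (s := s) (v := id) (Function.injective_id.injOn)
      (lt_of_le_of_lt Polynomial.degree_le_natDegree (by
        rw [hcard]; exact_mod_cast Nat.lt_succ_of_le hP))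
    conv_lhs => rw [h]
    rw [Lagrange.interpolate_apply, Polynomial.eval_finsetSum]
    refine Finset.sum_congr rfl fun t _ => ?_
    simp [mul_comm]

theorem sph_det_poly {m : ℕ} (A : EuclideanSpace ℝ (Fin m) →L[ℝ] EuclideanSpace ℝ (Fin m)) :
    ∃ P : Polynomial ℝ, P.natDegree ≤ m ∧
      ∀ t : ℝ, P.eval t = (ContinuousLinearMap.id ℝ _ + t • A).det := by
  let b := (EuclideanSpace.basisFun (Fin m) ℝ).toBasis
  let M := LinearMap.toMatrix b b (A : _ →ₗ[ℝ] _)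
  refine ⟨Matrix.det ((Polynomial.X : Polynomial ℝ) • M.map Polynomial.C +
    (1 : Matrix (Fin m) (Fin m) ℝ).map Polynomial.C), ?_, ?_⟩
  · simpa using Polynomial.natDegree_det_X_add_C_le M 1
  · intro t
    rw [ContinuousLinearMap.det, ← LinearMap.det_toMatrix b,
      ← Polynomial.coe_evalRingHom, RingHom.map_det]
    congr 1
    have : ((ContinuousLinearMap.id ℝ _ + t • A : _ →L[ℝ] _) : EuclideanSpace ℝ (Fin m) →ₗ[ℝ] _)
      = LinearMap.id + t • (A : _ →ₗ[ℝ] _) := rfl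
    have h2 : LinearMap.toMatrix b b (LinearMap.id + t • (A : _ →ₗ[ℝ] _)) = 1 + t • M := by
      rw [map_add, map_smul, LinearMap.toMatrix_id]
    rw [this, h2]
    ext i j
    by_cases hij : i = j
    · simp [hij, add_comm]; exact mul_comm _ _
    · simp [hij, add_comm]; exact mul_comm _ _

theorem sph_small {m : ℕ} (u : EuclideanSpace ℝ (Fin m) → EuclideanSpace ℝ (Fin m))
    (hu : ContDiff ℝ 1 u) (hc : HasCompactSupport u) :
    ∃ ε > 0, ∀ t : ℝ, 0 < t → t < ε → ∀ B : Set (EuclideanSpace ℝ (Fin m)), MeasurableSet B →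
      (∀ x, x ∉ B → u x = 0) → ∀ φ : EuclideanSpace ℝ (Fin m) → ℝ,
      ∫ x in B, (ContinuousLinearMap.id ℝ _ + t • fderiv ℝ u x).det * φ (x + t • u x) =
        ∫ x in B, φ x := by
  obtain ⟨K, hK⟩ := ContDiff.lipschitzWith_of_hasCompactSupport hc hu one_ne_zero
  have hdet : ∀ᶠ A : EuclideanSpace ℝ (Fin m) →L[ℝ] EuclideanSpace ℝ (Fin m) in 𝓝 0,
      0 < (ContinuousLinearMap.id ℝ _ + A).det := by
    have : Continuous fun A : EuclideanSpace ℝ (Fin m) →L[ℝ] EuclideanSpace ℝ (Fin m) =>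
      (ContinuousLinearMap.id ℝ _ + A).det :=
        ContinuousLinearMap.continuous_det.comp (by fun_prop)
    refine this.continuousAt.eventually (lt_mem_nhds ?_)
    simp [ContinuousLinearMap.det]
  obtain ⟨η, hη, hball⟩ := Metric.eventually_nhds_iff.1 hdet
  refine ⟨min (1 / (K + 1)) (η / (K + 1)), by positivity, ?_⟩
  intro t ht0 ht B hB huB φ
  have hKp : (0:ℝ) < K + 1 := by positivity
  have ht1 : t * (K + 1) < 1 := by
    have := lt_of_lt_of_le ht (min_le_left _ _); rwa [lt_div_iff₀ hKp] at this
  have ht2 : t * (K + 1) < η := by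
    have := lt_of_lt_of_le ht (min_le_right _ _); rwa [lt_div_iff₀ hKp] at this
  set g : EuclideanSpace ℝ (Fin m) → EuclideanSpace ℝ (Fin m) := fun x => x + t • u x with hg
  let tt : NNReal := ⟨t, ht0.le⟩
  have happ : ApproximatesLinearOn g
      ((ContinuousLinearEquiv.refl ℝ (EuclideanSpace ℝ (Fin m)) : _ ≃L[ℝ] _) :
        EuclideanSpace ℝ (Fin m) →L[ℝ] EuclideanSpace ℝ (Fin m)) univ (tt * K) := by
    intro x _ y _
    have h1 := hK.dist_le_mul x y
    rw [dist_eq_norm, dist_eq_norm] at h1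
    have : g x - g y - (x - y) = t • (u x - u y) := by simp only [hg, smul_sub]; abel
    simp only [ContinuousLinearEquiv.coe_coe, ContinuousLinearEquiv.coe_refl', id]
    rw [this, norm_smul, Real.norm_of_nonneg ht0.le]
    show t * _ ≤ (t * K) * _
    rw [mul_assoc]; gcongr
  have hcst : Subsingleton (EuclideanSpace ℝ (Fin m)) ∨ tt * K <
      ‖((ContinuousLinearEquiv.refl ℝ (EuclideanSpace ℝ (Fin m))).symm :
        EuclideanSpace ℝ (Fin m) →L[ℝ] EuclideanSpace ℝ (Fin m))‖₊⁻¹ := by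
    rcases subsingleton_or_nontrivial (EuclideanSpace ℝ (Fin m)) with h | h
    · exact Or.inl h
    · right
      have : ‖((ContinuousLinearEquiv.refl ℝ (EuclideanSpace ℝ (Fin m))).symm :
        EuclideanSpace ℝ (Fin m) →L[ℝ] EuclideanSpace ℝ (Fin m))‖₊ = 1 := by
        exact ContinuousLinearMap.nnnorm_id
      rw [this, inv_one, ← NNReal.coe_lt_coe]
      show t * K < 1
      nlinarith
  have hsurj := happ.surjective hcst
  have hinj : Function.Injective g := injOn_univ.1 (happ.injOn hcst)
  have himg : g '' B = B := by
    have hout : ∀ x, x ∉ B → g x = x := fun x hx => by simp [hg, huB x hx]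
    apply Subset.antisymm
    · rintro _ ⟨x, hx, rfl⟩
      by_contra hn
      have := hinj (hout _ hn)
      rw [this] at hn; exact hn hx
    · intro y hy
      obtain ⟨x, rfl⟩ := hsurj y
      refine ⟨x, ?_, rfl⟩
      by_contra hn
      rw [hout x hn] at hy; exact hn hy
  have hder : ∀ x ∈ B, HasFDerivWithinAt g (ContinuousLinearMap.id ℝ _ + t • fderiv ℝ u x) B x := by
    intro x _
    exact ((hasFDerivAt_id x).add
      (((hu.differentiable one_ne_zero) x).hasFDerivAt.const_smul t)).hasFDerivWithinAt
  have key := integral_image_eq_integral_abs_det_fderiv_smul volume hB hder hinj.injOn φ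
  rw [himg] at key
  rw [key]
  refine setIntegral_congr_fun hB fun x _ => ?_
  have hpos : 0 < (ContinuousLinearMap.id ℝ _ + t • fderiv ℝ u x).det := by
    apply hball
    rw [dist_zero_right, norm_smul, Real.norm_of_nonneg ht0.le]
    have := norm_fderiv_le_of_lipschitz ℝ hK (x₀ := x)
    nlinarith
  simp only [abs_of_pos hpos, smul_eq_mul, hg]

theorem sph_integral {m : ℕ} (u : EuclideanSpace ℝ (Fin m) → EuclideanSpace ℝ (Fin m))
    (hu : ContDiff ℝ 1 u) (hc : HasCompactSupport u) (B : Set (EuclideanSpace ℝ (Fin m)))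
    (hB : IsCompact B) (huB : ∀ x, x ∉ B → u x = 0) (M : ℝ) (N : ℕ) :
    ∫ x in B, (ContinuousLinearMap.id ℝ _ + fderiv ℝ u x).det * (1 - ‖x + u x‖ ^ 2 / M) ^ N =
        ∫ x in B, (1 - ‖x‖ ^ 2 / M) ^ N := by
  obtain ⟨ε, hε, hsmall⟩ := sph_small u hu hc
  obtain ⟨s, w, hs, hw, hP⟩ := sph_interp (m + 2 * N) ε hε
  have hpoly : ∀ x, (ContinuousLinearMap.id ℝ _ + fderiv ℝ u x).det * (1 - ‖x + u x‖ ^ 2 / M) ^ N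
      = ∑ t ∈ s, w t * ((ContinuousLinearMap.id ℝ _ + t • fderiv ℝ u x).det *
        (1 - ‖x + t • u x‖ ^ 2 / M) ^ N) := by
    intro x
    obtain ⟨P, hPd, hPe⟩ := sph_det_poly (fderiv ℝ u x)
    let Q : Polynomial ℝ := Polynomial.C (1 - ‖x‖ ^ 2 / M) +
      Polynomial.C (- 2 * inner ℝ x (u x) / M) * Polynomial.X +
      Polynomial.C (- ‖u x‖ ^ 2 / M) * Polynomial.X ^ 2
    have hQd : Q.natDegree ≤ 2 := by
      simp only [Q]; compute_degree
    have hQe : ∀ t, Q.eval t = 1 - ‖x + t • u x‖ ^ 2 / M := by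
      intro t
      rw [norm_add_sq_real, inner_smul_right, norm_smul, mul_pow, Real.norm_eq_abs, sq_abs]
      simp [Q]; ring
    have h := hP (P * Q ^ N) (Polynomial.natDegree_mul_le.trans (by
      have := Polynomial.natDegree_pow_le (p := Q) (n := N)
      nlinarith))
    simp only [Polynomial.eval_mul, Polynomial.eval_pow, hPe, hQe, one_smul] at h
    exact h
  have hcont : ∀ t : ℝ, Continuous fun x => ((ContinuousLinearMap.id ℝ _ + t • fderiv ℝ u x).det *
        (1 - ‖x + t • u x‖ ^ 2 / M) ^ N) := by
    intro t
    have h1 : Continuous fun x => (ContinuousLinearMap.id ℝ _ + t • fderiv ℝ u x).det :=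
      ContinuousLinearMap.continuous_det.comp
        (continuous_const.add ((hu.continuous_fderiv one_ne_zero).const_smul t))
    have h2 := hu.continuous
    fun_prop
  simp_rw [hpoly]
  rw [integral_finsetSum]
  · simp_rw [integral_const_mul]
    rw [Finset.sum_congr rfl (g := fun t => w t * ∫ x in B, (1 - ‖x‖ ^ 2 / M) ^ N)]
    · rw [← Finset.sum_mul, hw, one_mul]
    · intro t ht
      rw [hsmall t (hs t ht).1 (hs t ht).2 B hB.measurableSet huB (fun y => (1 - ‖y‖ ^ 2 / M) ^ N)]
  · intro t _
    exact ((hcont t).continuousOn.integrableOn_compact hB).const_mul _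

theorem sph_zero {m : ℕ} (u : EuclideanSpace ℝ (Fin m) → EuclideanSpace ℝ (Fin m))
    (hu : ContDiff ℝ 1 u) (hc : HasCompactSupport u) : ∃ x, x + u x = 0 := by
  by_contra! hne
  obtain ⟨R, hR, huR⟩ : ∃ R : ℝ, 0 < R ∧ ∀ x, x ∉ Metric.closedBall 0 R → u x = 0 := by
    obtain ⟨R, hR⟩ := hc.isBounded.subset_closedBall (0 : EuclideanSpace ℝ (Fin m))
    refine ⟨max R 1, by positivity, fun x hx => ?_⟩
    apply image_eq_zero_of_notMem_tsupport
    intro h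
    exact hx (Metric.closedBall_subset_closedBall (le_max_left _ _) (hR h))
  set B := Metric.closedBall (0 : EuclideanSpace ℝ (Fin m)) R with hBdef
  have hB : IsCompact B := isCompact_closedBall _ _
  have hBne : B.Nonempty := ⟨0, by simp [hBdef, hR.le]⟩
  have hgc : Continuous fun x => ‖x + u x‖ := by
    have := hu.continuous
    fun_prop
  have hdc : Continuous fun x => (ContinuousLinearMap.id ℝ _ + fderiv ℝ u x).det :=
      ContinuousLinearMap.continuous_det.comp
        (continuous_const.add (hu.continuous_fderiv one_ne_zero))
  obtain ⟨x₀, hx₀, hmin⟩ := hB.exists_isMinOn hBne hgc.continuousOn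
  obtain ⟨x₁, hx₁, hmax⟩ := hB.exists_isMaxOn hBne hgc.continuousOn
  obtain ⟨x₂, hx₂, hdmax⟩ := hB.exists_isMaxOn hBne hdc.abs.continuousOn
  set C := |(ContinuousLinearMap.id ℝ _ + fderiv ℝ u x₂).det|
  set δ := min ‖x₀ + u x₀‖ R with hδ
  have hδ0 : 0 < δ := lt_min (norm_pos_iff.2 (hne _)) hR
  set M := ‖x₁ + u x₁‖ ^ 2 + R ^ 2 with hM
  have hM0 : 0 < M := by positivity
  have hδR : δ ≤ R := min_le_right _ _
  have hδM : δ ^ 2 ≤ M := by nlinarith [sq_nonneg ‖x₁ + u x₁‖]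
  set a := 1 - δ ^ 2 / M
  set b := 1 - (δ / 2) ^ 2 / M
  have ha : 0 ≤ a := by
    have : δ ^ 2 / M ≤ 1 := (div_le_one hM0).2 hδM
    simp only [a]; linarith
  have hab : a < b := by
    have : (δ / 2) ^ 2 / M < δ ^ 2 / M := by gcongr; linarith
    simp only [a, b]; linarith
  have hb : 0 < b := lt_of_le_of_lt ha hab
  set c := volume.real (Metric.ball (0 : EuclideanSpace ℝ (Fin m)) (δ / 2))
  set V := volume.real B
  have hc0 : 0 < c :=
    ENNReal.toReal_pos (Metric.measure_ball_pos volume _ (by positivity)).ne'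
      measure_ball_lt_top.ne
  have key : ∀ N : ℕ, c * b ^ N ≤ (C * V) * a ^ N := by
    intro N
    have hI := sph_integral u hu hc B hB huR M N
    have hφc : Continuous fun x : EuclideanSpace ℝ (Fin m) => (1 - ‖x‖ ^ 2 / M) ^ N := by fun_prop
    have hnn : ∀ x ∈ B, 0 ≤ 1 - ‖x‖ ^ 2 / M := by
      intro x hx
      have hx' : ‖x‖ ≤ R := by simpa [hBdef] using hx
      have : ‖x‖ ^ 2 / M ≤ 1 := (div_le_one hM0).2 (by
        have := norm_nonneg x
        nlinarith [sq_nonneg ‖x₁ + u x₁‖])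
      linarith
    have hsub : Metric.ball (0 : EuclideanSpace ℝ (Fin m)) (δ / 2) ⊆ B :=
      Metric.ball_subset_closedBall.trans (Metric.closedBall_subset_closedBall (by linarith))
    have h1 : c * b ^ N ≤ ∫ x in B, (1 - ‖x‖ ^ 2 / M) ^ N := by
      have hint := hφc.continuousOn.integrableOn_compact (μ := volume) hB
      calc c * b ^ N = ∫ x in Metric.ball (0 : EuclideanSpace ℝ (Fin m)) (δ / 2), b ^ N := by
            simp [c]
        _ ≤ ∫ x in Metric.ball (0 : EuclideanSpace ℝ (Fin m)) (δ / 2), (1 - ‖x‖ ^ 2 / M) ^ N := by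
            refine setIntegral_mono_on (integrableOn_const measure_ball_lt_top.ne)
              (hint.mono_set hsub) measurableSet_ball fun x hx => ?_
            have hx' : ‖x‖ < δ / 2 := by simpa using hx
            simp only [b]
            have : 0 ≤ 1 - (δ / 2) ^ 2 / M := hb.le
            gcongr
        _ ≤ _ := by
            refine setIntegral_mono_set hint ?_ hsub.eventuallyLE
            refine (ae_restrict_iff' hB.measurableSet).2 (ae_of_all _ fun x hx => ?_)
            exact pow_nonneg (hnn x hx) N
    have h2 : ∫ x in B, (ContinuousLinearMap.id ℝ _ + fderiv ℝ u x).det *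
        (1 - ‖x + u x‖ ^ 2 / M) ^ N ≤ (C * V) * a ^ N := by
      refine (le_abs_self _).trans ?_
      rw [← Real.norm_eq_abs]
      refine (norm_setIntegral_le_of_norm_le_const (C := C * a ^ N) hB.measure_lt_top ?_).trans
        (le_of_eq (by simp only [V]; ring))
      intro x hx
      rw [norm_mul, Real.norm_eq_abs, norm_pow, Real.norm_eq_abs]
      have e1 := hdmax hx
      have e2 : ‖x + u x‖ ≤ ‖x₁ + u x₁‖ := hmax hx
      have e3 : ‖x₀ + u x₀‖ ≤ ‖x + u x‖ := hmin hx
      have e4 : δ ≤ ‖x + u x‖ := (min_le_left _ _).trans e3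
      have e5 : 0 ≤ 1 - ‖x + u x‖ ^ 2 / M := by
        have : ‖x + u x‖ ^ 2 / M ≤ 1 := (div_le_one hM0).2 (by
          have := norm_nonneg (x + u x)
          nlinarith [sq_nonneg R])
        linarith
      have e6 : 1 - ‖x + u x‖ ^ 2 / M ≤ a := by simp only [a]; gcongr
      rw [abs_of_nonneg e5]
      gcongr
      exact e1
    linarith
  have hlim : Tendsto (fun N : ℕ => (C * V) * (a / b) ^ N) atTop (𝓝 ((C * V) * 0)) :=
    (tendsto_pow_atTop_nhds_zero_of_lt_one (by positivity) ((div_lt_one hb).2 hab)).const_mul _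
  have : c ≤ (C * V) * 0 := by
    refine ge_of_tendsto' hlim fun N => ?_
    rw [div_pow, ← mul_div_assoc, le_div_iff₀ (by positivity)]
    exact key N
  linarith

/-- For `n ≥ 1`, a continuous map `f : S^n → ℝ^n` is not injective: there exist
distinct points `x ≠ y` on the sphere with `f x = f y`. -/
theorem sphere_map_not_injective (n : ℕ) (hn : 1 ≤ n)
    (f : EuclideanSpace ℝ (Fin (n + 1)) → EuclideanSpace ℝ (Fin n))
    (hf : ContinuousOn f (Metric.sphere (0 : EuclideanSpace ℝ (Fin (n + 1))) 1)) :
    ∃ x ∈ Metric.sphere (0 : EuclideanSpace ℝ (Fin (n + 1))) 1,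
      ∃ y ∈ Metric.sphere (0 : EuclideanSpace ℝ (Fin (n + 1))) 1,
        x ≠ y ∧ f x = f y := by
  by_contra! hinj
  set S := Metric.sphere (0 : EuclideanSpace ℝ (Fin (n + 1))) 1 with hS
  have hScl : IsClosed S := Metric.isClosed_sphere
  have : CompactSpace S := isCompact_iff_compactSpace.1 (isCompact_sphere _ _)
  let fS : C(S, EuclideanSpace ℝ (Fin n)) := ⟨S.domRestrict f, hf.domRestrict⟩
  have hfS : Topology.IsClosedEmbedding fS := by
    refine Continuous.isClosedEmbedding fS.continuous ?_
    intro x y hxy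
    by_contra hne
    exact hinj x x.2 y y.2 (fun h => hne (Subtype.ext h)) hxy
  -- extend `f` to the whole space
  obtain ⟨F, hF⟩ := ContinuousMap.exists_restrict_eq hScl fS
  -- extend the inverse of `f` to the whole space
  obtain ⟨G₀, hG₀⟩ := ContinuousMap.exists_extension' hfS
    (⟨Subtype.val, continuous_subtype_val⟩ : C(S, EuclideanSpace ℝ (Fin (n + 1))))
  have hGF : ∀ x ∈ S, G₀ (F x) = x := by
    intro x hx
    have h1 : F x = fS ⟨x, hx⟩ := by rw [← hF]; rfl
    rw [h1]
    exact congrFun hG₀ ⟨x, hx⟩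
  obtain ⟨G, hG, hGd, -⟩ := G₀.continuous.exists_contDiff_approx 1
    (ε := fun _ => 1 / 4) continuous_const (fun _ => by norm_num)
  have hdense := ContDiff.dense_compl_range_of_finrank_lt_finrank hG (by simp)
  obtain ⟨c, hcr, hcn⟩ := hdense.exists_dist_lt 0 (show (0 : ℝ) < 1 / 4 by norm_num)
  rw [dist_zero_left] at hcn
  have hGc : Continuous G := hG.continuous
  let h : EuclideanSpace ℝ (Fin (n + 1)) → EuclideanSpace ℝ (Fin (n + 1)) := fun x => G (F x) - c
  have hhc : Continuous h := by
    have := F.continuous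
    fun_prop
  have hh0 : ∀ x, h x ≠ 0 := by
    intro x hx
    exact hcr ⟨F x, sub_eq_zero.1 hx⟩
  have hhS : ∀ x ∈ S, ‖h x - x‖ < 1 / 2 := by
    intro x hx
    have h1 := hGd (F x)
    rw [hGF x hx, dist_eq_norm] at h1
    calc ‖h x - x‖ = ‖(G (F x) - x) - c‖ := by simp only [h]; congr 1; abel
      _ ≤ ‖G (F x) - x‖ + ‖c‖ := norm_sub_le _ _
      _ < 1 / 2 := by linarith
  -- radial projection to the unit ball
  let π : EuclideanSpace ℝ (Fin (n + 1)) → EuclideanSpace ℝ (Fin (n + 1)) :=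
    fun x => (max 1 ‖x‖)⁻¹ • x
  have hπ : Continuous π := by
    refine Continuous.smul (Continuous.inv₀ (continuous_const.max continuous_norm) fun x => ?_) continuous_id
    positivity
  have hπ1 : ∀ x, ‖x‖ ≤ 1 → π x = x := fun x hx => by simp [π, max_eq_left hx]
  have hπ2 : ∀ x, 1 ≤ ‖x‖ → π x ∈ S := fun x hx => by
    have : ‖x‖ ≠ 0 := by positivity
    simp [π, max_eq_right hx, hS, norm_smul, this]
  let χ : ContDiffBump (0 : EuclideanSpace ℝ (Fin (n + 1))) := ⟨1, 2, by norm_num, by norm_num⟩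
  let e : EuclideanSpace ℝ (Fin (n + 1)) → EuclideanSpace ℝ (Fin (n + 1)) :=
    fun x => h (π x) - π x
  have he : Continuous e := (hhc.comp hπ).sub hπ
  let v : EuclideanSpace ℝ (Fin (n + 1)) → EuclideanSpace ℝ (Fin (n + 1)) :=
    fun x => x + χ x • e x
  have hv : Continuous v := continuous_id.add (χ.continuous.smul he)
  have hv0 : ∀ x, v x ≠ 0 := by
    intro x
    rcases le_total ‖x‖ 1 with hx | hx
    · have : χ x = 1 := χ.one_of_mem_closedBall (by simpa [χ] using hx)
      simp only [v, this, e, hπ1 x hx, one_smul]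
      simpa using hh0 x
    · intro h0
      have h1 := hhS _ (hπ2 x hx)
      have h2 : ‖x‖ = ‖χ x • e x‖ := by
        have h3 := congrArg norm (eq_neg_of_add_eq_zero_left h0)
        rwa [norm_neg] at h3
      rw [norm_smul, Real.norm_of_nonneg χ.nonneg] at h2
      have h3 : χ x ≤ 1 := χ.le_one
      have h4 : 0 ≤ χ x := χ.nonneg
      have h5 : ‖e x‖ < 1 / 2 := h1
      nlinarith [norm_nonneg (e x)]
  obtain ⟨w, hw, hwd, -⟩ := he.exists_contDiff_approx 1
    (ε := fun x => ‖v x‖) hv.norm (fun x => norm_pos_iff.2 (hv0 x))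
  obtain ⟨x, hx⟩ := sph_zero (fun x => χ x • w x) (χ.contDiff.smul hw)
    (χ.hasCompactSupport.smul_right)
  have h1 := hwd x
  rw [dist_eq_norm] at h1
  have h2 : v x = - (χ x • (w x - e x)) := by
    have : v x = (x + χ x • w x) - χ x • (w x - e x) := by
      simp only [v, smul_sub]; abel
    rw [this, hx, zero_sub]
  have h3 : ‖v x‖ = χ x * ‖w x - e x‖ := by
    rw [h2, norm_neg, norm_smul, Real.norm_of_nonneg χ.nonneg]
  have h4 : χ x ≤ 1 := χ.le_one
  have h5 : 0 ≤ χ x := χ.nonneg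
  nlinarith [norm_nonneg (w x - e x)]
end

section
/- Let n ≥ 1 and let f be a continuous map from the unit n-sphere S^n ⊆ ℝ^{n+1} to ℝ^n. Then there exists a nonempty subset A ⊆ S^n such that A and its antipodal set -A = {-x : x ∈ A} are disjoint (hence antipodal regions) and the images satisfy f(A) = f(-A), i.e. f '' A = f '' (-A). -/
lemma bu_odd_poly_root (p : Polynomial ℝ) (hm : p.Monic) (hp : Odd p.natDegree) : ∃ x, p.IsRoot x := by
  have hdeg : 0 < p.natDegree := hp.pos
  have h1 : Filter.Tendsto (fun x => p.eval x) Filter.atTop Filter.atTop :=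
    p.tendsto_atTop_of_leadingCoeff_nonneg (Polynomial.natDegree_pos_iff_degree_pos.mp hdeg)
      (by rw [hm.leadingCoeff]; norm_num)
  have h2 : Filter.Tendsto (fun x => (p.comp (-Polynomial.X)).eval x) Filter.atTop Filter.atBot := by
    apply Polynomial.tendsto_atBot_of_leadingCoeff_nonpos
    · apply Polynomial.natDegree_pos_iff_degree_pos.mp
      rw [Polynomial.natDegree_comp]; simpa using hdeg
    · rw [Polynomial.leadingCoeff_comp (by simp)]
      simp [hm.leadingCoeff, hp.neg_one_pow]
  obtain ⟨a, ha⟩ := (h1.eventually (Filter.eventually_ge_atTop 0)).exists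
  obtain ⟨b, hb⟩ := (h2.eventually (Filter.eventually_le_atBot 0)).exists
  simp only [Polynomial.eval_comp, Polynomial.eval_neg, Polynomial.eval_X] at hb
  obtain ⟨c, hc⟩ := mem_range_of_exists_le_of_exists_ge (f := fun x => p.eval x) p.continuous
    ⟨_, hb⟩ ⟨_, ha⟩
  exact ⟨c, hc⟩

lemma bu_common_eigen {ι : Type} : ∀ (N : ℕ) (V : Type) [AddCommGroup V] [Module ℝ V]
    [FiniteDimensional ℝ V] (T : ι → Module.End ℝ V), (∀ i j, Commute (T i) (T j)) →
    Module.finrank ℝ V = N → Odd N → ∃ v : V, v ≠ 0 ∧ ∃ c : ι → ℝ, ∀ i, T i v = c i • v := by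
  intro N
  induction N using Nat.strong_induction_on with
  | _ N ih =>
  intro V _ _ _ T hT hN hodd
  have sub : ∀ W : Submodule ℝ V, (∀ i, ∀ x ∈ W, T i x ∈ W) → Odd (Module.finrank ℝ W) →
      Module.finrank ℝ W < N → ∃ v : V, v ≠ 0 ∧ ∃ c : ι → ℝ, ∀ i, T i v = c i • v := by
    intro W hW ho hlt
    obtain ⟨v, hv, c, hc⟩ := ih _ hlt W (fun i => (T i).restrict (hW i))
      (by
        intro i j
        ext x
        exact congrArg (fun S : Module.End ℝ V => S x) (hT i j).eq) rfl ho
    refine ⟨v, by simpa using hv, c, fun i => ?_⟩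
    simpa using congrArg Subtype.val (hc i)
  have hpos : 0 < N := hodd.pos
  by_cases hs : ∀ i, ∃ c : ℝ, ∀ v, T i v = c • v
  · choose c hc using hs
    have : Nontrivial V := Module.nontrivial_of_finrank_pos (R := ℝ) (by omega)
    obtain ⟨v, hv⟩ := exists_ne (0 : V)
    exact ⟨v, hv, c, fun i => hc i v⟩
  · push Not at hs
    obtain ⟨i, hi⟩ := hs
    obtain ⟨c, hc⟩ := bu_odd_poly_root (T i).charpoly (LinearMap.charpoly_monic _)
      (by rw [LinearMap.charpoly_natDegree, hN]; exact hodd)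
    have hev := (Module.End.hasEigenvalue_iff_isRoot_charpoly _ _).2 hc
    set S : Module.End ℝ V := T i - algebraMap ℝ _ c with hS
    have hcomm : ∀ j x, T j (S x) = S (T j x) := by
      intro j x
      have := congrArg (fun S : Module.End ℝ V => S x) (hT j i).eq
      simp only [Module.End.mul_apply] at this
      simp [hS, this]
    have hrn := LinearMap.finrank_range_add_finrank_ker S
    obtain ⟨v, hv⟩ := hev.exists_hasEigenvector
    have hker : 0 < Module.finrank ℝ (LinearMap.ker S) := by
      have : Nontrivial (LinearMap.ker S) := by
        refine ⟨⟨v, ?_⟩, 0, ?_⟩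
        · simp [hS, hv.apply_eq_smul]
        · intro h; exact hv.2 (congrArg Subtype.val h)
      exact Module.finrank_pos
    obtain ⟨w, hw⟩ := hi c
    have hran : 0 < Module.finrank ℝ (LinearMap.range S) := by
      have : Nontrivial (LinearMap.range S) := by
        refine ⟨⟨S w, w, rfl⟩, 0, ?_⟩
        intro h
        have := congrArg Subtype.val h
        simp [hS, sub_eq_zero] at this
        exact hw this
      exact Module.finrank_pos
    rcases Nat.even_or_odd (Module.finrank ℝ (LinearMap.range S)) with he | ho
    · refine sub (LinearMap.ker S) ?_ ?_ (by omega)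
      · intro j x hx
        rw [LinearMap.mem_ker] at *
        rw [← hcomm, hx, map_zero]
      · grind
    · refine sub (LinearMap.range S) ?_ ho (by omega)
      rintro j _ ⟨x, rfl⟩
      exact ⟨T j x, (hcomm j x).symm⟩

lemma bu_bad_countable {n : ℕ} (U : MvPolynomial (Fin n) ℝ →ₗ[ℝ] MvPolynomial (Fin n) ℝ)
    (hU : ∀ D, ∀ p ∈ MvPolynomial.restrictTotalDegree (Fin n) ℝ D,
      U p ∈ MvPolynomial.restrictTotalDegree (Fin n) ℝ D) :
    {s : ℝ | ¬ Function.Bijective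
      (LinearMap.id + s • U : MvPolynomial (Fin n) ℝ →ₗ[ℝ] MvPolynomial (Fin n) ℝ)}.Countable := by
  let UD : ∀ D, Module.End ℝ (MvPolynomial.restrictTotalDegree (Fin n) ℝ D) :=
    fun D => U.restrict (hU D)
  refine Set.Countable.mono ?_ (Set.countable_iUnion fun D =>
    ((Module.End.finite_hasEigenvalue (UD D)).image (fun μ => -μ⁻¹)).countable)
  intro s hs
  by_contra hcon
  apply hs
  simp only [Set.mem_iUnion, not_exists] at hcon
  have key : ∀ D, Function.Injective (LinearMap.id + s • UD D :
      Module.End ℝ (MvPolynomial.restrictTotalDegree (Fin n) ℝ D)) := by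
    intro D
    rw [injective_iff_map_eq_zero]
    intro v hv
    by_contra hne
    simp only [LinearMap.add_apply, LinearMap.id_apply, LinearMap.smul_apply] at hv
    have hs0 : s ≠ 0 := by
      rintro rfl
      simp at hv; exact hne hv
    apply hcon D
    refine ⟨-s⁻¹, ?_, by simp⟩
    apply Module.End.hasEigenvalue_of_hasEigenvector (x := v)
    refine ⟨?_, hne⟩
    rw [Module.End.mem_eigenspace_iff]
    have : s • UD D v = -v := by rw [eq_neg_iff_add_eq_zero, add_comm]; exact hv
    rw [neg_smul, ← smul_neg, ← this, smul_smul, inv_mul_cancel₀ hs0, one_smul]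
  have ksur : ∀ D, Function.Surjective (LinearMap.id + s • UD D :
      Module.End ℝ (MvPolynomial.restrictTotalDegree (Fin n) ℝ D)) := fun D =>
    LinearMap.surjective_of_injective (key D)
  have mem : ∀ p : MvPolynomial (Fin n) ℝ,
      p ∈ MvPolynomial.restrictTotalDegree (Fin n) ℝ p.totalDegree := fun p =>
    (MvPolynomial.mem_restrictTotalDegree _ _ _).2 le_rfl
  constructor
  · rw [injective_iff_map_eq_zero]
    intro p hp
    have := (injective_iff_map_eq_zero _).1 (key p.totalDegree) ⟨p, mem p⟩ (by
      apply Subtype.ext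
      simpa [UD] using hp)
    simpa using this
  · intro p
    obtain ⟨q, hq⟩ := ksur p.totalDegree ⟨p, mem p⟩
    refine ⟨q, ?_⟩
    simpa [UD] using congrArg Subtype.val hq

noncomputable section BUAlg

open MvPolynomial

/-- exponents reduced in the first `k` variables -/
def buRed (n d k : ℕ) : Set (Fin n →₀ ℕ) := {m | ∀ i : Fin n, i.val < k → m i < d}

open Classical in
/-- the perturbation operator -/
def buU (n d k : ℕ) (f : Fin n → MvPolynomial (Fin n) ℝ) :
    MvPolynomial (Fin n) ℝ →ₗ[ℝ] MvPolynomial (Fin n) ℝ :=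
  (basisMonomials (Fin n) ℝ).constr ℝ (fun m => ∑ i : Fin n,
    if i.val < k ∧ d ≤ m i ∧ ∀ j < i, m j < d then
      monomial (m - Finsupp.single i d) (1 : ℝ) * f i else 0)

open Classical in
lemma buU_monomial (n d k : ℕ) (f : Fin n → MvPolynomial (Fin n) ℝ) (m : Fin n →₀ ℕ) :
    buU n d k f (monomial m 1) = ∑ i : Fin n,
    if i.val < k ∧ d ≤ m i ∧ ∀ j < i, m j < d then
      monomial (m - Finsupp.single i d) (1 : ℝ) * f i else 0 := by
  have := (basisMonomials (Fin n) ℝ).constr_basis ℝ (fun m => ∑ i : Fin n,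
    if i.val < k ∧ d ≤ m i ∧ ∀ j < i, m j < d then
      monomial (m - Finsupp.single i d) (1 : ℝ) * f i else 0) m
  rw [coe_basisMonomials] at this
  exact this

lemma buU_red {n d k : ℕ} (f : Fin n → MvPolynomial (Fin n) ℝ) {m : Fin n →₀ ℕ}
    (hm : m ∈ buRed n d k) : buU n d k f (monomial m 1) = 0 := by
  rw [buU_monomial]
  apply Finset.sum_eq_zero
  intro i _
  rw [if_neg]
  rintro ⟨h1, h2, -⟩
  exact absurd (hm i h1) (not_lt.2 h2)

lemma buU_nonred {n d k : ℕ} (f : Fin n → MvPolynomial (Fin n) ℝ) {r : Fin n →₀ ℕ} (i : Fin n)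
    (hi : i.val < k) (hr : r ∈ buRed n d i.val) :
    buU n d k f (monomial (r + Finsupp.single i d) 1) = monomial r 1 * f i := by
  rw [buU_monomial, Finset.sum_eq_single i]
  · rw [if_pos, add_tsub_cancel_right]
    refine ⟨hi, by simp, fun j hj => ?_⟩
    have := hr j hj
    simpa [Finsupp.single_apply, hj.ne'] using this
  · intro j _ hj
    rw [if_neg]
    rintro ⟨h1, h2, h3⟩
    rcases lt_or_gt_of_ne hj with h | h
    · have := hr j h
      simp [Finsupp.single_apply, h.ne'] at h2
      omega
    · have := h3 i h
      simp at this
  · simp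

lemma bu_not_red {n d k : ℕ} {m : Fin n →₀ ℕ} (hm : m ∉ buRed n d k) :
    ∃ (i : Fin n) (r : Fin n →₀ ℕ), i.val < k ∧ r ∈ buRed n d i.val ∧
      m = r + Finsupp.single i d := by
  classical
  simp only [buRed, Set.mem_ofPred_eq, not_forall, not_lt] at hm
  let S : Finset (Fin n) := Finset.univ.filter (fun i => i.val < k ∧ d ≤ m i)
  have hS : S.Nonempty := by
    obtain ⟨i, h1, h2⟩ := hm
    exact ⟨i, by simp [S, h1, h2]⟩
  have hmem := S.min'_mem hS
  set i := S.min' hS with hidef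
  have hi : i.val < k ∧ d ≤ m i := by simpa [S] using hmem
  refine ⟨i, m - Finsupp.single i d, hi.1, ?_, ?_⟩
  · intro j hj
    have hlt : j < i := hj
    have : m j < d := by
      by_contra hcon
      have : j ∈ S := by simp [S]; omega
      exact absurd (S.min'_le j this) (not_le.2 hlt)
    simp [Finsupp.single_apply, hlt.ne']
    exact this
  · rw [tsub_add_cancel_of_le]
    simpa using hi.2

lemma bu_span_mono (n : ℕ) (W : Submodule ℝ (MvPolynomial (Fin n) ℝ))
    (s : Set (Fin n →₀ ℕ)) (h : ∀ m ∈ s, monomial m 1 ∈ W) : restrictSupport ℝ s ≤ W := by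
  rw [restrictSupport_eq_span, Submodule.span_le]
  rintro _ ⟨m, hm, rfl⟩
  exact h m hm

lemma buU_degree {n d k : ℕ} (f : Fin n → MvPolynomial (Fin n) ℝ)
    (hf : ∀ i, (f i).totalDegree ≤ d) (D : ℕ) :
    ∀ p ∈ restrictTotalDegree (Fin n) ℝ D, buU n d k f p ∈ restrictTotalDegree (Fin n) ℝ D := by
  have : restrictTotalDegree (Fin n) ℝ D ≤ (restrictTotalDegree (Fin n) ℝ D).comap (buU n d k f) := by
    apply bu_span_mono
    intro m hm
    rw [Submodule.mem_comap]
    by_cases hred : m ∈ buRed n d k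
    · rw [buU_red f hred]; exact Submodule.zero_mem _
    · obtain ⟨i, r, hi, hr, rfl⟩ := bu_not_red hred
      rw [buU_nonred f i hi hr, mem_restrictTotalDegree]
      refine (totalDegree_mul _ _).trans ?_
      rw [totalDegree_monomial _ one_ne_zero]
      have h1 : (r + Finsupp.single i d).sum (fun _ e => e) ≤ D := hm
      rw [Finsupp.sum_add_index' (by simp) (by simp), Finsupp.sum_single_index rfl] at h1
      have := hf i
      omega
  exact this

/-- `x_i^d + s f_i` -/
def buG (n d : ℕ) (f : Fin n → MvPolynomial (Fin n) ℝ) (s : ℝ) (i : Fin n) :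
    MvPolynomial (Fin n) ℝ := X i ^ d + s • f i

/-- `id + s U` -/
def buT (n d k : ℕ) (f : Fin n → MvPolynomial (Fin n) ℝ) (s : ℝ) :
    MvPolynomial (Fin n) ℝ →ₗ[ℝ] MvPolynomial (Fin n) ℝ := LinearMap.id + s • buU n d k f

lemma buT_red {n d k : ℕ} (f : Fin n → MvPolynomial (Fin n) ℝ) (s : ℝ) :
    ∀ p ∈ restrictSupport ℝ (buRed n d k), buT n d k f s p = p := by
  have : restrictSupport ℝ (buRed n d k) ≤ LinearMap.eqLocus (buT n d k f s) LinearMap.id := by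
    apply bu_span_mono
    intro m hm
    rw [LinearMap.mem_eqLocus]
    simp [buT, buU_red f hm]
  exact this

lemma buT_nonred {n d k : ℕ} (f : Fin n → MvPolynomial (Fin n) ℝ) (s : ℝ) {r : Fin n →₀ ℕ}
    (i : Fin n) (hi : i.val < k) (hr : r ∈ buRed n d i.val) :
    buT n d k f s (monomial (r + Finsupp.single i d) 1) = monomial r 1 * buG n d f s i := by
  simp only [buT, LinearMap.add_apply, LinearMap.id_apply, LinearMap.smul_apply,
    buU_nonred f i hi hr, buG, mul_add, mul_smul_comm]
  congr 1
  rw [X_pow_eq_monomial, monomial_mul, one_mul]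

/-- ideal of first `k` -/
def buI (n d k : ℕ) (f : Fin n → MvPolynomial (Fin n) ℝ) (s : ℝ) : Ideal (MvPolynomial (Fin n) ℝ) :=
  Ideal.span {g | ∃ i : Fin n, i.val < k ∧ g = buG n d f s i}

lemma bu_split (n : ℕ) (s : Set (Fin n →₀ ℕ)) (p : MvPolynomial (Fin n) ℝ) :
    ∃ a ∈ restrictSupport ℝ s, ∃ b ∈ restrictSupport ℝ sᶜ, a + b = p := by
  rw [← Submodule.mem_sup]
  have : restrictSupport ℝ Set.univ ≤ restrictSupport ℝ s ⊔ restrictSupport ℝ sᶜ := by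
    apply bu_span_mono
    intro m _
    by_cases h : m ∈ s
    · exact Submodule.mem_sup_left (by simp [h])
    · exact Submodule.mem_sup_right (by simp [h])
  apply this
  simp

lemma buT_nonred_mem {n d k : ℕ} (f : Fin n → MvPolynomial (Fin n) ℝ) (s : ℝ) :
    ∀ p ∈ restrictSupport ℝ (buRed n d k)ᶜ, buT n d k f s p ∈ buI n d k f s := by
  have : restrictSupport ℝ (buRed n d k)ᶜ ≤
      ((buI n d k f s).restrictScalars ℝ).comap (buT n d k f s) := by
    apply bu_span_mono
    intro m hm
    obtain ⟨i, r, hi, hr, rfl⟩ := bu_not_red hm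
    rw [Submodule.mem_comap, buT_nonred f s i hi hr]
    exact Ideal.mul_mem_left _ _ (Ideal.subset_span ⟨i, hi, rfl⟩)
  exact this

lemma bu_division {n d k : ℕ} (f : Fin n → MvPolynomial (Fin n) ℝ) (s : ℝ)
    (hs : Function.Surjective (buT n d k f s)) (p : MvPolynomial (Fin n) ℝ) :
    ∃ a ∈ restrictSupport ℝ (buRed n d k), ∃ b ∈ buI n d k f s, a + b = p := by
  obtain ⟨q, rfl⟩ := hs p
  obtain ⟨a, ha, b, hb, rfl⟩ := bu_split n (buRed n d k) q
  exact ⟨a, ha, _, buT_nonred_mem f s b hb, by rw [map_add, buT_red f s a ha]⟩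

lemma bu_ideal_le {n d : ℕ} (f : Fin n → MvPolynomial (Fin n) ℝ) (s : ℝ)
    (hs : ∀ k ≤ n, Function.Surjective (buT n d k f s)) (k : ℕ) (hk : k ≤ n) :
    (buI n d k f s).restrictScalars ℝ ≤
      (restrictSupport ℝ (buRed n d n)ᶜ).map (buT n d n f s) := by
  induction k with
  | zero =>
    intro p hp
    have : p = 0 := by simpa [buI] using hp
    rw [this]; exact Submodule.zero_mem _
  | succ k ih =>
    have ih := ih (by omega)
    intro p hp
    have hp : p ∈ buI n d (k+1) f s := hp
    have hle : buI n d (k+1) f s ≤ Ideal.span {buG n d f s ⟨k, hk⟩} ⊔ buI n d k f s := by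
      rw [buI, Ideal.span_le]
      rintro _ ⟨i, hi, rfl⟩
      rcases Nat.lt_succ_iff_lt_or_eq.1 hi with h | h
      · exact Ideal.mem_sup_right (Ideal.subset_span ⟨i, h, rfl⟩)
      · apply Ideal.mem_sup_left
        have : i = ⟨k, hk⟩ := Fin.ext h
        rw [this]
        exact Ideal.subset_span rfl
    obtain ⟨u, hu, v, hv, rfl⟩ := Submodule.mem_sup.1 (hle hp)
    obtain ⟨h, rfl⟩ := Ideal.mem_span_singleton'.1 hu
    obtain ⟨a, ha, b, hb, rfl⟩ := bu_division f s (hs k (by omega)) h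
    rw [add_mul, add_assoc]
    refine Submodule.add_mem _ ?_ (ih ?_)
    · have : restrictSupport ℝ (buRed n d k) ≤
        ((restrictSupport ℝ (buRed n d n)ᶜ).map (buT n d n f s)).comap
          (LinearMap.mulRight ℝ (buG n d f s ⟨k, hk⟩)) := by
        apply bu_span_mono
        intro r hr
        rw [Submodule.mem_comap, LinearMap.mulRight_apply, ← buT_nonred (k := n) f s ⟨k, hk⟩ hk hr]
        apply Submodule.mem_map_of_mem
        rw [monomial_mem_restrictSupport]
        left
        intro hcon
        have := hcon ⟨k, hk⟩ hk
        simp at this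
      exact this ha
    · exact Ideal.add_mem _ (Ideal.mul_mem_right _ _ hb) hv

lemma bu_card (n d : ℕ) : Nat.card (buRed n d n) = d ^ n := by
  have e : buRed n d n ≃ (Fin n → Fin d) :=
    { toFun := fun m i => ⟨m.1 i, m.2 i i.2⟩
      invFun := fun g => ⟨Finsupp.equivFunOnFinite.symm (fun i => (g i).val),
        fun i _ => (g i).2⟩
      left_inv := fun m => by ext i; rfl
      right_inv := fun g => by ext i; rfl }
  rw [Nat.card_congr e]
  simp

lemma bu_point {n N : ℕ} (A : Type) [CommRing A] [Algebra ℝ A] [FiniteDimensional ℝ A]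
    (hN : Odd N) (hfin : Module.finrank ℝ A = N) (φ : MvPolynomial (Fin n) ℝ →ₐ[ℝ] A) :
    ∃ y : Fin n → ℝ, ∀ p, φ p = 0 → eval y p = 0 := by
  obtain ⟨v, hv, y, hy⟩ := bu_common_eigen N A
    (fun i : Fin n => LinearMap.mulLeft ℝ (φ (X i)))
    (fun i j => LinearMap.ext fun x => by
      simp [mul_left_comm]) hfin hN
  simp only [LinearMap.mulLeft_apply] at hy
  have key : ∀ p : MvPolynomial (Fin n) ℝ, φ p * v = eval y p • v := by
    intro p
    induction p using MvPolynomial.induction_on with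
    | C a =>
      rw [eval_C, Algebra.smul_def, ← MvPolynomial.algebraMap_eq, AlgHom.commutes]
    | add p q hp hq => rw [map_add, add_mul, hp, hq, map_add, add_smul]
    | mul_X p i hp =>
      rw [map_mul, mul_assoc, hy, mul_smul_comm, hp, smul_smul, map_mul, eval_X, mul_comm]
  refine ⟨y, fun p hp => ?_⟩
  have h1 := key p
  rw [hp, zero_mul] at h1
  exact (smul_eq_zero.1 h1.symm).resolve_right hv

lemma bu_zero {n d : ℕ} (hd : Odd d) (f : Fin n → MvPolynomial (Fin n) ℝ) (s : ℝ)
    (hs : ∀ k ≤ n, Function.Bijective (buT n d k f s)) :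
    ∃ y : Fin n → ℝ, ∀ i, y i ^ d + s * eval y (f i) = 0 := by
  set I := buI n d n f s with hI
  let N := restrictSupport ℝ (buRed n d n)
  let φ : N →ₗ[ℝ] (MvPolynomial (Fin n) ℝ ⧸ I) :=
    (Ideal.Quotient.mkₐ ℝ I).toLinearMap ∘ₗ N.subtype
  have hφ : Function.Bijective φ := by
    constructor
    · rw [injective_iff_map_eq_zero]
      rintro ⟨a, ha⟩ h
      have haI : a ∈ I := Ideal.Quotient.eq_zero_iff_mem.1 h
      obtain ⟨b, hb, hab⟩ := bu_ideal_le f s (fun k hk => (hs k hk).2) n le_rfl haI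
      rw [← buT_red f s a ha] at hab
      have hba := (hs n le_rfl).1 hab
      subst hba
      have : b.support = ∅ := by
        apply Finset.eq_empty_of_forall_notMem
        intro m hm
        exact hb hm (ha hm)
      apply Subtype.ext
      simpa using this
    · intro q
      obtain ⟨p, rfl⟩ := Ideal.Quotient.mk_surjective q
      obtain ⟨a, ha, b, hb, rfl⟩ := bu_division f s (hs n le_rfl).2 p
      refine ⟨⟨a, ha⟩, ?_⟩
      change Ideal.Quotient.mk I a = _
      rw [map_add, Ideal.Quotient.eq_zero_iff_mem.2 hb, add_zero]
  let e := LinearEquiv.ofBijective φ hφ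
  have hfinN : Module.finrank ℝ N = d ^ n := by
    rw [Module.finrank_eq_nat_card_basis (basisRestrictSupport ℝ (buRed n d n)), bu_card]
  have hpos : 0 < d ^ n := (hd.pow).pos
  have : FiniteDimensional ℝ N := FiniteDimensional.of_finrank_pos (by omega)
  have : FiniteDimensional ℝ (MvPolynomial (Fin n) ℝ ⧸ I) := e.finiteDimensional
  have hfin : Module.finrank ℝ (MvPolynomial (Fin n) ℝ ⧸ I) = d ^ n := by
    rw [← e.finrank_eq, hfinN]
  obtain ⟨y, hy⟩ := bu_point _ hd.pow hfin (Ideal.Quotient.mkₐ ℝ I)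
  refine ⟨y, fun i => ?_⟩
  have h2 := hy (buG n d f s i) (Ideal.Quotient.eq_zero_iff_mem.2
    (Ideal.subset_span ⟨i, i.2, rfl⟩))
  simpa [buG] using h2

lemma bu_zero_large {n d : ℕ} (hd : Odd d) (f : Fin n → MvPolynomial (Fin n) ℝ)
    (hf : ∀ i, (f i).totalDegree ≤ d) (M : ℝ) :
    ∃ s > M, ∃ y : Fin n → ℝ, ∀ i, y i ^ d + s * eval y (f i) = 0 := by
  have hc : (⋃ k : ℕ, {s : ℝ | ¬ Function.Bijective (buT n d k f s)}).Countable :=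
    Set.countable_iUnion fun k => bu_bad_countable (buU n d k f) (buU_degree f hf)
  obtain ⟨s, hs, hsM⟩ := (hc.dense_compl ℝ).exists_mem_open isOpen_Ioi
    (Set.nonempty_Ioi (a := M))
  simp only [Set.mem_compl_iff, Set.mem_iUnion, Set.mem_ofPred_eq, not_exists, not_not] at hs
  exact ⟨s, hsM, bu_zero hd f s fun k _ => hs k⟩

end BUAlg

noncomputable section BUAna

open MvPolynomial

/-- the point `(1, y)` -/
def buZ {n : ℕ} {R : Type} [One R] (y : Fin n → R) : Fin (n + 1) → R := Fin.cons 1 y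

lemma bu_homog (n : ℕ) (p : MvPolynomial (Fin (n + 1)) ℝ) :
    ∃ k0 : ℕ, ∀ k ≥ k0, ∃ G : MvPolynomial (Fin n) ℝ, G.totalDegree ≤ 2 * k + 1 ∧
      ∀ (y : Fin n → ℝ) (N : ℝ), N ≠ 0 → N ^ 2 = 1 + ∑ i, y i ^ 2 →
        eval y G = N ^ (2 * k + 1) *
          ((eval (fun i => buZ y i / N) p - eval (fun i => -(buZ y i / N)) p) / 2) := by
  induction p using MvPolynomial.induction_on' with
  | add p q hp hq =>
    obtain ⟨k1, h1⟩ := hp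
    obtain ⟨k2, h2⟩ := hq
    refine ⟨max k1 k2, fun k hk => ?_⟩
    obtain ⟨G1, d1, e1⟩ := h1 k (le_trans (le_max_left _ _) hk)
    obtain ⟨G2, d2, e2⟩ := h2 k (le_trans (le_max_right _ _) hk)
    refine ⟨G1 + G2, (totalDegree_add _ _).trans (max_le d1 d2), fun y N hN hy => ?_⟩
    rw [map_add, e1 y N hN hy, e2 y N hN hy, map_add, map_add]
    ring
  | monomial m a =>
    set t := ∑ i, m i with ht
    have hev : ∀ (y : Fin n → ℝ) (c : ℝ), eval (fun i => c * buZ y i) (monomial m a) =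
        a * (c ^ t * ∏ i, buZ y i ^ m i) := by
      intro y c
      rw [eval_monomial, Finsupp.prod_fintype _ _ (by simp)]
      simp only [mul_pow, Finset.prod_mul_distrib, Finset.prod_pow_eq_pow_sum, ht]
    have hev1 : ∀ (y : Fin n → ℝ) (N : ℝ), eval (fun i => buZ y i / N) (monomial m a) =
        a * (N⁻¹ ^ t * ∏ i, buZ y i ^ m i) := by
      intro y N
      rw [← hev]
      congr 2
      ext i; ring
    have hev2 : ∀ (y : Fin n → ℝ) (N : ℝ), eval (fun i => -(buZ y i / N)) (monomial m a) =
        a * ((-N⁻¹) ^ t * ∏ i, buZ y i ^ m i) := by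
      intro y N
      rw [← hev]
      congr 2
      ext i; ring
    refine ⟨t, fun k hk => ?_⟩
    rcases Nat.even_or_odd t with hte | hto
    · refine ⟨0, by simp, fun y N hN hy => ?_⟩
      rw [hev1, hev2, hte.neg_pow]
      simp
    · obtain ⟨u, hu⟩ := hto
      refine ⟨(C a * ∏ i, buZ (R := MvPolynomial (Fin n) ℝ) X i ^ m i) *
        (1 + ∑ i, X i ^ 2) ^ (k - u), ?_, fun y N hN hy => ?_⟩
      · refine (totalDegree_mul _ _).trans ?_
        have h1 : (C a * ∏ i, buZ (R := MvPolynomial (Fin n) ℝ) X i ^ m i).totalDegree ≤ t := by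
          refine (totalDegree_mul _ _).trans ?_
          rw [totalDegree_C, zero_add]
          refine (totalDegree_finsetProd _ _).trans (Finset.sum_le_sum fun i _ => ?_)
          refine (totalDegree_pow _ _).trans ?_
          have : (buZ (R := MvPolynomial (Fin n) ℝ) X i).totalDegree ≤ 1 := by
            refine Fin.cases ?_ (fun j => ?_) i
            · simp [buZ]
            · simp [buZ]
          nlinarith
        have h2 : ((1 + ∑ i, X i ^ 2 : MvPolynomial (Fin n) ℝ) ^ (k - u)).totalDegree ≤
            (k - u) * 2 := by
          refine (totalDegree_pow _ _).trans (Nat.mul_le_mul_left _ ?_)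
          refine (totalDegree_add _ _).trans (max_le (by simp) ?_)
          refine totalDegree_finsetSum_le fun i _ => ?_
          simp
        omega
      · have hodd : Odd t := ⟨u, hu⟩
        have hZ : ∀ i, eval y (buZ (R := MvPolynomial (Fin n) ℝ) X i) = buZ y i := by
          intro i
          refine Fin.cases ?_ (fun j => ?_) i
          · simp [buZ]
          · simp [buZ]
        rw [hev1, hev2, hodd.neg_pow]
        simp only [map_mul, map_pow, map_add, map_sum, map_prod, eval_C, eval_X, map_one, hZ]
        rw [← hy, ← pow_mul]
        have : 2 * k + 1 = 2 * (k - u) + t := by omega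
        rw [this, pow_add]
        have hNt : N ^ t * N⁻¹ ^ t = 1 := by rw [← mul_pow, mul_inv_cancel₀ hN, one_pow]
        linear_combination (- a * (∏ i, buZ y i ^ m i) * N ^ (2 * (k - u))) * hNt

lemma bu_approx (n : ℕ) (h : EuclideanSpace ℝ (Fin (n + 1)) → ℝ)
    (hc : ContinuousOn h (Metric.sphere 0 1)) (ε : ℝ) (hε : 0 < ε) :
    ∃ p : MvPolynomial (Fin (n + 1)) ℝ,
      ∀ x ∈ Metric.sphere (0 : EuclideanSpace ℝ (Fin (n + 1))) 1,
        |eval (fun i => x i) p - h x| < ε := by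
  let S := Metric.sphere (0 : EuclideanSpace ℝ (Fin (n + 1))) 1
  let co : Fin (n + 1) → C(S, ℝ) := fun i => ⟨fun x => x.1 i, by fun_prop⟩
  let Φ : MvPolynomial (Fin (n + 1)) ℝ →ₐ[ℝ] C(S, ℝ) := aeval co
  have hΦ : ∀ p (x : S), Φ p x = eval (fun i => x.1 i) p := by
    intro p x
    induction p using MvPolynomial.induction_on with
    | C a => simp [Φ]
    | add p q hp hq => simp [hp, hq]
    | mul_X p i hp =>
      rw [map_mul, ContinuousMap.mul_apply, hp, map_mul, eval_X]
      simp [Φ, co]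
  have hsep : Φ.range.SeparatesPoints := by
    intro x y hxy
    have : ∃ i, x.1 i ≠ y.1 i := by
      by_contra hcon
      push Not at hcon
      exact hxy (Subtype.ext (PiLp.ext hcon))
    obtain ⟨i, hi⟩ := this
    refine ⟨_, ⟨Φ (X i), ⟨X i, rfl⟩, rfl⟩, ?_⟩
    simpa [hΦ] using hi
  have hcont : Continuous (fun x : S => h x.1) := hc.domRestrict
  obtain ⟨⟨g, p, rfl⟩, hg⟩ :=
    ContinuousMap.exists_mem_subalgebra_near_continuous_of_separatesPoints Φ.range hsep _ hcont ε hε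
  refine ⟨p, fun x hx => ?_⟩
  have := hg ⟨x, hx⟩
  rw [Real.norm_eq_abs] at this
  rw [← hΦ p ⟨x, hx⟩]
  exact this

lemma bu_near (n : ℕ) (h : EuclideanSpace ℝ (Fin (n + 1)) → EuclideanSpace ℝ (Fin n))
    (hc : ContinuousOn h (Metric.sphere 0 1)) (hodd : ∀ x, h (-x) = - h x) (ε : ℝ) (hε : 0 < ε) :
    ∃ x ∈ Metric.sphere (0 : EuclideanSpace ℝ (Fin (n + 1))) 1, ∀ i, |h x i| < ε := by
  have happ : ∀ i, ∃ p : MvPolynomial (Fin (n + 1)) ℝ,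
      ∀ x ∈ Metric.sphere (0 : EuclideanSpace ℝ (Fin (n + 1))) 1,
        |eval (fun j => x j) p - h x i| < ε / 2 := fun i =>
    bu_approx n (fun x => h x i) (by fun_prop) (ε / 2) (by positivity)
  choose p hp using happ
  choose k0 hk0 using fun i => bu_homog n (p i)
  let k := ∑ i, k0 i
  have hk : ∀ i, k ≥ k0 i := fun i => Finset.single_le_sum (f := k0) (fun _ _ => Nat.zero_le _)
    (Finset.mem_univ i)
  choose G hGd hG using fun i => hk0 i k (hk i)
  obtain ⟨s, hs, y, hy⟩ := bu_zero_large (d := 2 * k + 1) ⟨k, rfl⟩ G hGd (2 / ε)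
  have hs0 : 0 < s := lt_trans (by positivity) hs
  have hsum : 0 ≤ ∑ i, y i ^ 2 := Finset.sum_nonneg fun i _ => sq_nonneg _
  set N := Real.sqrt (1 + ∑ i, y i ^ 2) with hN
  have hNsq : N ^ 2 = 1 + ∑ i, y i ^ 2 := Real.sq_sqrt (by linarith)
  have hNpos : 0 < N := Real.sqrt_pos.2 (by linarith)
  let x : EuclideanSpace ℝ (Fin (n + 1)) := WithLp.toLp 2 (fun i => buZ y i / N)
  have hx : x ∈ Metric.sphere (0 : EuclideanSpace ℝ (Fin (n + 1))) 1 := by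
    rw [mem_sphere_zero_iff_norm, EuclideanSpace.norm_eq, Real.sqrt_eq_one]
    simp only [x, Real.norm_eq_abs, sq_abs, div_pow, Fin.sum_univ_succ, buZ, Fin.cons_zero,
      Fin.cons_succ]
    rw [← Finset.sum_div, ← add_div, hNsq, one_pow, div_self]
    linarith
  have hnx : -x ∈ Metric.sphere (0 : EuclideanSpace ℝ (Fin (n + 1))) 1 := by
    simpa using hx
  refine ⟨x, hx, fun i => ?_⟩
  have e1 := hp i x hx
  have e2 := hp i (-x) hnx
  have e3 := hG i y N hNpos.ne' hNsq
  have e4 := hy i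
  have a1 : (fun j => x j) = fun j => buZ y j / N := rfl
  have a2 : (fun j => (-x) j) = fun j => -(buZ y j / N) := rfl
  rw [a1] at e1
  rw [a2, hodd] at e2
  set P := eval (fun j => buZ y j / N) (p i)
  set Q := eval (fun j => -(buZ y j / N)) (p i)
  have e5 : |(P - Q) / 2 - h x i| < ε / 2 := by
    have : (-h x) i = - h x i := rfl
    rw [this] at e2
    rw [abs_lt] at *
    constructor <;> linarith [e1.1, e1.2, e2.1, e2.2]
  have hyN : |y i / N| ≤ 1 := by
    rw [abs_div, abs_of_pos hNpos, div_le_one hNpos]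
    refine abs_le_of_sq_le_sq ?_ hNpos.le
    rw [hNsq]
    have := Finset.single_le_sum (f := fun i => y i ^ 2) (fun _ _ => sq_nonneg _)
      (Finset.mem_univ i)
    linarith
  have e6 : s * ((P - Q) / 2) = - (y i / N) ^ (2 * k + 1) := by
    rw [e3] at e4
    rw [div_pow, ← neg_div, eq_div_iff (by positivity)]
    linarith
  have e7 : |(P - Q) / 2| < ε / 2 := by
    have h1 : |s * ((P - Q) / 2)| ≤ 1 := by
      rw [e6, abs_neg, abs_pow]
      exact pow_le_one₀ (abs_nonneg _) hyN
    rw [abs_mul, abs_of_pos hs0] at h1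
    rw [gt_iff_lt, div_lt_iff₀ hε] at hs
    by_contra hcon
    push Not at hcon
    nlinarith
  have : h x i = (P - Q) / 2 - ((P - Q) / 2 - h x i) := by ring
  rw [this]
  refine (abs_sub _ _).trans_lt ?_
  linarith

lemma bu_exists_zero (n : ℕ) (h : EuclideanSpace ℝ (Fin (n + 1)) → EuclideanSpace ℝ (Fin n))
    (hc : ContinuousOn h (Metric.sphere 0 1)) (hodd : ∀ x, h (-x) = - h x) :
    ∃ x ∈ Metric.sphere (0 : EuclideanSpace ℝ (Fin (n + 1))) 1, h x = 0 := by
  let F : EuclideanSpace ℝ (Fin (n + 1)) → ℝ := fun x => ∑ i, |h x i|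
  have hF : ContinuousOn F (Metric.sphere 0 1) := by
    apply continuousOn_finsetSum
    intro i _
    fun_prop
  obtain ⟨x0, hx0, -⟩ := bu_near n h hc hodd 1 one_pos
  obtain ⟨x, hx, hmin⟩ := (isCompact_sphere (0 : EuclideanSpace ℝ (Fin (n + 1))) 1).exists_isMinOn
    ⟨x0, hx0⟩ hF
  have hFx : F x ≤ 0 := by
    by_contra hcon
    push Not at hcon
    obtain ⟨z, hz, hzi⟩ := bu_near n h hc hodd (F x / (n + 1)) (by positivity)
    have h1 : F x ≤ F z := hmin hz
    have h2 : F z ≤ ∑ i : Fin n, F x / (n + 1) := Finset.sum_le_sum fun i _ => (hzi i).le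
    rw [Finset.sum_const, Finset.card_univ, Fintype.card_fin, nsmul_eq_mul] at h2
    have h3 : (n : ℝ) * (F x / (n + 1)) < F x := by
      rw [← mul_div_assoc, div_lt_iff₀ (by positivity)]
      nlinarith
    linarith
  refine ⟨x, hx, ?_⟩
  ext i
  have h1 : |h x i| ≤ F x := Finset.single_le_sum (f := fun i => |h x i|)
    (fun _ _ => abs_nonneg _) (Finset.mem_univ i)
  exact abs_eq_zero.1 (le_antisymm (h1.trans hFx) (abs_nonneg _))

end BUAna

/-- **Region-based Borsuk–Ulam.** For `n ≥ 1` and a continuous `f : S^n → ℝ^n`,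
there is a nonempty region `A ⊆ S^n` disjoint from its antipodal region `-A`
(so `A, -A` are antipodal regions) with `f '' A = f '' (-A)`. -/
theorem region_borsuk_ulam (n : ℕ) (hn : 1 ≤ n)
    (f : EuclideanSpace ℝ (Fin (n + 1)) → EuclideanSpace ℝ (Fin n))
    (hf : ContinuousOn f (Metric.sphere (0 : EuclideanSpace ℝ (Fin (n + 1))) 1)) :
    ∃ A : Set (EuclideanSpace ℝ (Fin (n + 1))),
      A ⊆ Metric.sphere (0 : EuclideanSpace ℝ (Fin (n + 1))) 1 ∧
      A.Nonempty ∧ Disjoint A (-A) ∧ f '' A = f '' (-A) := by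
  obtain ⟨x, hx, h0⟩ := bu_exists_zero n (fun x => f x - f (-x))
    (hf.sub (hf.comp continuous_neg.continuousOn (fun x hx => by simpa using hx)))
    (fun x => by simp)
  refine ⟨{x}, by simpa using hx, Set.singleton_nonempty x, ?_, ?_⟩
  · rw [Set.neg_singleton, Set.disjoint_singleton]
    intro h
    have h2 : (2 : ℝ) • x = 0 := by
      rw [two_smul]
      nth_rewrite 1 [h]
      exact neg_add_cancel x
    have : x = 0 := (smul_eq_zero.1 h2).resolve_left two_ne_zero
    rw [this] at hx
    simp at hx
  · rw [Set.neg_singleton, Set.image_singleton, Set.image_singleton, sub_eq_zero.1 h0]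
end

section
/- Let B_2 = {x ∈ ℝ² : ‖x‖ ≤ 1} be the closed unit ball in the Euclidean plane. Every continuous map f : B_2 → B_2 has a fixed point: there exists x ∈ B_2 with f(x) = x. -/
lemma brouwer_complex_aux (g : ℂ → ℂ) (hg : Continuous g) (hb : ∀ z, ‖g z‖ ≤ 1) :
    ∃ z, g z = z := by
  by_contra! hne
  have h0 : ∀ z, z - g z ≠ 0 := fun z h => hne z (sub_eq_zero.1 h).symm
  obtain ⟨L, hL⟩ : ∃ L : C(ℂ, ℂ), ∀ z, Complex.exp (L z) = z - g z := by
    let F : C(ℂ, ℂ) := ⟨fun z => z - g z, by fun_prop⟩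
    obtain ⟨L, hL, -⟩ := Complex.isCoveringMapOn_exp.existsUnique_continuousMap_lifts
      (f := F) (a₀ := 0) (e₀ := Complex.log (0 - g 0))
      (Complex.exp_log (h0 0)) (fun z => h0 z)
    exact ⟨L, fun z => congrFun hL.2 z⟩
  let c : ℝ → ℂ := fun t => 2 * Complex.exp (t * Complex.I)
  have hc : Continuous c := by fun_prop
  have hcn : ∀ t, ‖c t‖ = 2 := fun t => by
    simp [c, Complex.norm_exp_ofReal_mul_I]
  have hc0 : ∀ t, c t ≠ 0 := fun t h => by have := hcn t; simp [h] at this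
  have hs : ∀ t, 1 - g (c t) / c t ∈ Complex.slitPlane := fun t => by
    rw [sub_eq_add_neg]
    apply Complex.mem_slitPlane_of_norm_lt_one
    rw [norm_neg, norm_div, hcn]
    linarith [hb (c t)]
  let k : ℝ → ℂ := fun t => L (c t) - Complex.log (1 - g (c t) / c t) - t * Complex.I
  have hk : Continuous k := by
    have h1 : Continuous fun t => 1 - g (c t) / c t :=
      continuous_const.sub ((hg.comp hc).div hc hc0)
    have h2 : Continuous fun t => Complex.log (1 - g (c t) / c t) :=
      h1.clog hs
    have h3 : Continuous fun t => L (c t) := L.continuous.comp hc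
    exact (h3.sub h2).sub (by fun_prop)
  have hek : ∀ t, Complex.exp (k t) = 2 := fun t => by
    simp only [k]
    rw [Complex.exp_sub, Complex.exp_sub, hL, Complex.exp_log (Complex.slitPlane_ne_zero (hs t))]
    have h1 : 1 - g (c t) / c t = (c t - g (c t)) / c t := by
      rw [sub_div, div_self (hc0 t)]
    rw [h1, div_div_cancel₀ (h0 _)]
    simp only [c]
    rw [mul_div_cancel_right₀ _ (Complex.exp_ne_zero _)]
  have hconst := Complex.isCoveringMap_exp.const_of_comp hk
    (fun a b => Subtype.ext ((hek a).trans (hek b).symm)) 0 (2 * Real.pi)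
  have hc2 : c (2 * Real.pi) = c 0 := by
    simp [c, Complex.exp_two_pi_mul_I]
  simp only [k, hc2] at hconst
  have := congrArg Complex.im hconst
  simp at this
  linarith [Real.pi_pos]

theorem brouwer_dim_two (f : EuclideanSpace ℝ (Fin 2) → EuclideanSpace ℝ (Fin 2))
    (hf : ContinuousOn f (Metric.closedBall (0 : EuclideanSpace ℝ (Fin 2)) 1))
    (hmaps : Set.MapsTo f (Metric.closedBall (0 : EuclideanSpace ℝ (Fin 2)) 1)
      (Metric.closedBall (0 : EuclideanSpace ℝ (Fin 2)) 1)) :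
    ∃ x ∈ Metric.closedBall (0 : EuclideanSpace ℝ (Fin 2)) 1, f x = x := by
  let e := Complex.orthonormalBasisOneI.repr
  let p : EuclideanSpace ℝ (Fin 2) → EuclideanSpace ℝ (Fin 2) := fun x => (max 1 ‖x‖)⁻¹ • x
  have hpos : ∀ x : EuclideanSpace ℝ (Fin 2), 0 < max 1 ‖x‖ :=
    fun x => lt_of_lt_of_le one_pos (le_max_left _ _)
  have hp : Continuous p :=
    ((continuous_const.max continuous_norm).inv₀ (fun x => (hpos x).ne')).smul continuous_id
  have hpm : ∀ x, p x ∈ Metric.closedBall (0 : EuclideanSpace ℝ (Fin 2)) 1 := fun x => by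
    rw [mem_closedBall_zero_iff, norm_smul, norm_inv, Real.norm_of_nonneg (hpos x).le,
      inv_mul_le_one₀ (hpos x)]
    exact le_max_right _ _
  have hfp : Continuous fun x => f (p x) := hf.comp_continuous hp hpm
  obtain ⟨z, hz⟩ := brouwer_complex_aux (fun z => e.symm (f (p (e z))))
    (e.symm.continuous.comp (hfp.comp e.continuous)) (fun z => by
      rw [LinearIsometryEquiv.norm_map]
      exact mem_closedBall_zero_iff.1 (hmaps (hpm _)))
  have h1 : f (p (e z)) = e z := by
    simpa using congrArg e hz
  have h2 : e z ∈ Metric.closedBall (0 : EuclideanSpace ℝ (Fin 2)) 1 := by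
    rw [← h1]; exact hmaps (hpm _)
  have h3 : p (e z) = e z := by
    have := mem_closedBall_zero_iff.1 h2
    simp only [p]
    rw [max_eq_left this, inv_one, one_smul]
  exact ⟨e z, h2, by rw [h3] at h1; exact h1⟩
end
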